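/- Every finitely generated solvable minimax group belongs to the class 𝒰. -/

import Mathlib

/-!
Statement 18: every finitely generated solvable minimax group belongs to the
class `𝒰`.
-/

open CategoryTheory

noncomputable section




/-- The rational circle `ℚ/ℤ`. -/
abbrev RatCircle : Type := ℚ ⧸ AddSubgroup.zmultiples (1 : ℚ)

/-- The quasicyclic (Prüfer) `p`-group, realized as the `p`-primary part of `ℚ/ℤ`. -/
def pruferSubgroup (p : ℕ) : AddSubgroup RatCircle where
  carrier := {x | ∃ n : ℕ, (p ^ n : ℕ) • x = 0}
  zero_mem' := ⟨0, smul_zero _⟩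
  add_mem' := by
    rintro a b ⟨m, hm⟩ ⟨n, hn⟩
    refine ⟨m + n, ?_⟩
    have ha : (p ^ m * p ^ n) • a = 0 := by rw [mul_comm, mul_smul, hm, smul_zero]
    have hb : (p ^ m * p ^ n) • b = 0 := by rw [mul_smul, hn, smul_zero]
    rw [smul_add, pow_add, ha, hb, add_zero]
  neg_mem' := by
    rintro a ⟨m, hm⟩
    exact ⟨m, by rw [smul_neg, hm, neg_zero]⟩

/-- A group has a quasicyclic `p`-section if some quotient of a subgroup is
isomorphic to the Prüfer `p`-group. -/
def HasQuasicyclicSection (G : Type*) [Group G] (p : ℕ) : Prop :=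
  ∃ (H : Subgroup G) (K : Subgroup H) (_ : K.Normal),
    Nonempty ((H ⧸ K) ≃* Multiplicative (pruferSubgroup p))

/-- The spectrum of a group: the set of primes `p` such that the group has a
section isomorphic to the quasicyclic `p`-group. -/
def groupSpectrum (G : Type*) [Group G] : Set ℕ :=
  {p | p.Prime ∧ HasQuasicyclicSection G p}

/-- The spectrum of an (additive) abelian group, via `Multiplicative`. -/
abbrev addSpectrum (A : Type*) [AddGroup A] : Set ℕ :=
  groupSpectrum (Multiplicative A)

/-- An abelian group has finite rank if its torsion-free rank and all of its
`p`-ranks are finite. -/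
def FiniteRankAbelian (A : Type*) [AddCommGroup A] : Prop :=
  (∃ n : ℕ, ∀ k : ℕ, (∃ f : (Fin k →₀ ℤ) →+ A, Function.Injective f) → k ≤ n) ∧
  ∀ p : ℕ, p.Prime → {a : A | (p : ℕ) • a = 0}.Finite

/-- A group has finite rank (in the sense appropriate for abelian groups:
finite torsion-free rank and finite `p`-ranks). -/
def FiniteRankGroup (G : Type*) [Group G] : Prop :=
  (∃ n : ℕ, ∀ k : ℕ,
    (∃ f : Multiplicative (Fin k →₀ ℤ) →* G, Function.Injective f) → k ≤ n) ∧
  ∀ p : ℕ, p.Prime → {g : G | g ^ p = 1}.Finite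

/-- A solvable group of finite rank: a solvable group all of whose abelian
sections have finite rank. -/
def SolvableOfFiniteRank (G : Type*) [Group G] : Prop :=
  IsSolvable G ∧
    ∀ (H : Subgroup G) (K : Subgroup H) (_ : K.Normal),
      (∀ x y : H ⧸ K, x * y = y * x) → FiniteRankGroup (H ⧸ K)

/-- A group is virtually abelian. -/
def VirtuallyAbelian (G : Type*) [Group G] : Prop :=
  ∃ H : Subgroup G, H.index ≠ 0 ∧ ∀ x y : H, x * y = y * x

/-- A `ℤG`-module (given as an object of `Rep ℤ G`) whose underlying abelian group
is torsion-free, of finite rank, and `π`-spectral. -/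
def NiceRep {G : Type} [Group G] (π : Set ℕ) (M : Rep.{0} ℤ G) : Prop :=
  (∀ g : M, g ≠ 0 → ¬IsOfFinAddOrder g) ∧ FiniteRankAbelian M ∧ addSpectrum M ⊆ π

/-- The class `𝒰` of solvable groups of finite rank. -/
def MemClassU (G : Type) [Group G] : Prop :=
  SolvableOfFiniteRank G ∧
  ∃ (N : Subgroup G) (_ : N.Normal),
    Group.IsNilpotent N ∧
    Group.FG (G ⧸ N) ∧ VirtuallyAbelian (G ⧸ N) ∧
    ∃ (r : ℕ) (T : Fin (r + 1) → Subgroup G),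
      Monotone T ∧ T 0 = ⊥ ∧
      ((T (Fin.last r) : Set G) = {g : G | g ∈ N ∧ IsOfFinOrder g}) ∧
      (∀ (i : Fin (r + 1)) (g t : G), t ∈ T i → g * t * g⁻¹ ∈ T i) ∧
      (∀ (i : Fin r) (n t : G), n ∈ N → t ∈ T i.succ →
        n * t * n⁻¹ * t⁻¹ ∈ T i.castSucc) ∧
      (∀ i : Fin r, (T i.castSucc).relIndex (T i.succ) = 0 →
        ∃ M : Rep.{0} ℤ (G ⧸ N), NiceRep (groupSpectrum G) M ∧
          ∃ φ : M → G,
            (∀ m : M, φ m ∈ T i.succ) ∧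
            (∀ m m' : M, (φ (m + m'))⁻¹ * (φ m * φ m') ∈ T i.castSucc) ∧
            (∀ t : G, t ∈ T i.succ → ∃ m : M, (φ m)⁻¹ * t ∈ T i.castSucc) ∧
            (∀ (g : G) (m : M),
              (φ (M.ρ (QuotientGroup.mk g) m))⁻¹ * (g * φ m * g⁻¹) ∈ T i.castSucc))

/-- A solvable minimax group: there is a subnormal series of finite length each of
whose factors is cyclic or quasicyclic. -/
def IsMinimax (G : Type*) [Group G] : Prop :=
  ∃ (r : ℕ) (c : Fin (r + 1) → Subgroup G),
    Monotone c ∧ c 0 = ⊥ ∧ c (Fin.last r) = ⊤ ∧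
    ∀ i : Fin r, ∃ _ : ((c i.castSucc).subgroupOf (c i.succ)).Normal,
      IsCyclic ((c i.succ) ⧸ (c i.castSucc).subgroupOf (c i.succ)) ∨
      ∃ p : ℕ, p.Prime ∧
        Nonempty (((c i.succ) ⧸ (c i.castSucc).subgroupOf (c i.succ)) ≃*
          Multiplicative (pruferSubgroup p))

/-!
The abelian sections of a minimax group `G` are abelian minimax groups. If a solvable group acts on
an abelian minimax group, then some subgroup `H` of finite index acts in such a way that products of
sufficiently many `ρ g - 1` with `g ∈ ⁅H, H⁆` vanish: this is the theorem of Lie, Kolchin and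
Mal'cev, applied to `Hom(A, ℚ)` for torsion-free `A`, and to `Hom(A, ℤ(p^∞))` over the ring of
endomorphisms of `ℤ(p^∞)` for divisible torsion `A`. Hence a solvable minimax group has a normal
subgroup `H` of finite index with `N = ⁅H, H⁆` nilpotent.

If `G` is finitely generated, then `N / ⁅N, N⁆` is a finitely generated module over the Noetherian
ring `ℤ[H / N]`, so its torsion has finite exponent and some multiple of it is torsion-free.
Commutators map tensor powers of this torsion-free group onto the factors of the lower central
series of `N`, up to bounded index, and tensor products preserve torsion-free minimax groups. The
series required by the class `𝒰` is the intersection of the torsion subgroup of `N` with the lower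
central series of `N`, refined by the images of these tensor powers.
-/

open Function Module
open scoped commutatorElement TensorProduct

universe u v

/-! ### Abelian minimax groups -/

section CoprimeTorsion

variable {A : Type*} [AddCommGroup A]

theorem exists_zsmul_zsmul_eq_of_isCoprime {m n : ℤ} (h : IsCoprime m n) {a : A}
    (ha : n • a = 0) : ∃ u : ℤ, m • u • a = a := by
  obtain ⟨u, v, huv⟩ := h
  refine ⟨u, ?_⟩
  calc m • u • a = (u * m + v * n) • a := by
        rw [add_smul, mul_smul v, ha, smul_zero, add_zero, mul_comm, mul_smul]
    _ = a := by rw [huv, one_smul]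

theorem eq_zero_of_coprime_nsmul_eq_zero {m n : ℕ} (h : m.Coprime n) {a : A} (hm : m • a = 0)
    (hn : n • a = 0) : a = 0 := by
  rw [← AddMonoid.addOrderOf_eq_one_iff, ← Nat.dvd_one, ← h.gcd_eq_one]
  exact Nat.dvd_gcd (addOrderOf_dvd_of_nsmul_eq_zero hm) (addOrderOf_dvd_of_nsmul_eq_zero hn)

end CoprimeTorsion

/-- Divisibility as a property; Mathlib's `DivisibleBy A ℕ` carries a choice of quotients. -/
def IsDivisible (A : Type*) [AddCommGroup A] : Prop :=
  ∀ n : ℕ, n ≠ 0 → Surjective (n • · : A → A)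

/-- `p`-primary (torsion) abelian groups. -/
def IsPrimaryGroup (p : ℕ) (A : Type*) [AddCommGroup A] : Prop :=
  ∀ a : A, ∃ k : ℕ, p ^ k • a = 0

section Divisible

variable {A B : Type*} [AddCommGroup A] [AddCommGroup B]

theorem IsDivisible.subsingleton_of_nsmul_eq_zero (h : IsDivisible A) {m : ℕ} (hm : m ≠ 0)
    (hA : ∀ a : A, m • a = 0) : Subsingleton A :=
  subsingleton_of_forall_eq 0 fun a => by
    obtain ⟨b, rfl⟩ := h m hm a
    exact hA b

theorem IsPrimaryGroup.of_injective {p : ℕ} (h : IsPrimaryGroup p B) (f : A →+ B)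
    (hf : Injective f) : IsPrimaryGroup p A := fun a => by
  obtain ⟨k, hk⟩ := h (f a)
  exact ⟨k, hf (by rw [map_nsmul, hk, map_zero])⟩

theorem IsPrimaryGroup.of_surjective {p : ℕ} (h : IsPrimaryGroup p A) (f : A →+ B)
    (hf : Surjective f) : IsPrimaryGroup p B := fun b => by
  obtain ⟨a, rfl⟩ := hf b
  obtain ⟨k, hk⟩ := h a
  exact ⟨k, by rw [← map_nsmul, hk, map_zero]⟩

theorem IsPrimaryGroup.isDivisible {p : ℕ} (hp : p.Prime) (h : IsPrimaryGroup p A)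
    (hd : Surjective (p • · : A → A)) : IsDivisible A := by
  have surjective_of_prime (q : ℕ) (hq : q.Prime) : Surjective (q • · : A → A) := by
    by_cases hqp : q = p
    · rwa [hqp]
    · intro a
      obtain ⟨k, hk⟩ := h a
      obtain ⟨u, hu⟩ := exists_zsmul_zsmul_eq_of_isCoprime
        (Nat.isCoprime_iff_coprime.2 (((Nat.coprime_primes hq hp).2 hqp).pow_right k))
        (a := a) (by rw [natCast_zsmul, hk])
      exact ⟨u • a, by simpa only [natCast_zsmul] using hu⟩
  intro n hn
  induction n using induction_on_primes with
  | zero => exact absurd rfl hn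
  | one => exact fun a => ⟨a, one_nsmul a⟩
  | prime_mul q n hq ih =>
    simpa only [comp_def, mul_smul] using
      (surjective_of_prime q hq).comp (ih (right_ne_zero_of_mul hn))

end Divisible

theorem finite_of_isAddCyclic_of_nsmul_eq_zero {A : Type*} [AddCommGroup A] [IsAddCyclic A] {m : ℕ}
    (hm : m ≠ 0) (hA : ∀ a : A, m • a = 0) : Finite A := by
  obtain ⟨z, hz⟩ := IsAddCyclic.exists_zsmul_surjective (G := A)
  have : Finite (AddSubgroup.zmultiples z) := finite_zmultiples.2
    (isOfFinAddOrder_iff_nsmul_eq_zero.2 ⟨m, Nat.pos_of_ne_zero hm, hA z⟩)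
  exact Finite.of_surjective (fun x : AddSubgroup.zmultiples z => (x : A)) fun a =>
    ⟨⟨a, hz a⟩, rfl⟩

theorem finite_of_finite_ker {A F : Type*} [AddCommGroup A] [AddCommGroup F] (f : A →+ F)
    [Finite f.ker] [Finite f.range] : Finite A :=
  have : Finite (A ⧸ f.ker) := .of_equiv _ (QuotientAddGroup.quotientKerEquivRange f).symm.toEquiv
  .of_equiv _ (AddSubgroup.addGroupEquivQuotientProdAddSubgroup (s := f.ker)).symm

/-- The `p`-groups in which any two elements lie in a common cyclic subgroup. For `p` prime these
are the finite cyclic `p`-groups and the Prüfer `p`-group, a class closed under subgroups and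
quotients. -/
structure IsLocallyCyclicPrimary (p : ℕ) (A : Type*) [AddCommGroup A] : Prop where
  isPrimaryGroup : IsPrimaryGroup p A
  exists_mem_zmultiples : ∀ a b : A, ∃ c : A,
    a ∈ AddSubgroup.zmultiples c ∧ b ∈ AddSubgroup.zmultiples c

namespace IsLocallyCyclicPrimary

variable {p : ℕ} {A B : Type*} [AddCommGroup A] [AddCommGroup B]

theorem of_injective (h : IsLocallyCyclicPrimary p B) (f : A →+ B) (hf : Injective f) :
    IsLocallyCyclicPrimary p A := by
  refine ⟨h.isPrimaryGroup.of_injective f hf, fun a b => ?_⟩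
  obtain ⟨c, hac, hbc⟩ := h.exists_mem_zmultiples (f a) (f b)
  set C := (AddSubgroup.zmultiples c).comap f
  have : IsAddCyclic C :=
    isAddCyclic_of_injective (f.addSubgroupComap (AddSubgroup.zmultiples c)) fun x y hxy =>
      Subtype.ext (hf (congrArg Subtype.val hxy))
  obtain ⟨z, hz⟩ := IsAddCyclic.exists_zsmul_surjective (G := C)
  have mem_zmultiples (x : C) : (x : A) ∈ AddSubgroup.zmultiples (z : A) := by
    obtain ⟨n, rfl⟩ := hz x
    exact ⟨n, rfl⟩
  exact ⟨z, mem_zmultiples ⟨a, hac⟩, mem_zmultiples ⟨b, hbc⟩⟩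

theorem of_surjective (h : IsLocallyCyclicPrimary p A) (f : A →+ B) (hf : Surjective f) :
    IsLocallyCyclicPrimary p B := by
  refine ⟨h.isPrimaryGroup.of_surjective f hf, fun a b => ?_⟩
  obtain ⟨a, rfl⟩ := hf a
  obtain ⟨b, rfl⟩ := hf b
  obtain ⟨c, ⟨m, rfl⟩, ⟨n, rfl⟩⟩ := h.exists_mem_zmultiples a b
  exact ⟨f c, ⟨m, (map_zsmul f m c).symm⟩, ⟨n, (map_zsmul f n c).symm⟩⟩

theorem isAddCyclic_or_isDivisible (hp : p.Prime) (h : IsLocallyCyclicPrimary p A) :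
    IsAddCyclic A ∨ IsDivisible A := by
  rw [or_iff_not_imp_left]
  refine fun hcyc => h.isPrimaryGroup.isDivisible hp fun a => ?_
  obtain ⟨b, hb⟩ : ∃ b, b ∉ AddSubgroup.zmultiples a := by
    by_contra! hall
    exact hcyc ⟨a, hall⟩
  obtain ⟨c, ⟨m, rfl⟩, ⟨n, rfl⟩⟩ := h.exists_mem_zmultiples a b
  by_cases hpm : (p : ℤ) ∣ m
  · obtain ⟨l, rfl⟩ := hpm
    exact ⟨l • c, by simp only [mul_smul, natCast_zsmul]⟩
  · obtain ⟨k, hk⟩ := h.isPrimaryGroup c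
    have hcop : IsCoprime m ((p ^ k : ℕ) : ℤ) := by
      rw [Nat.cast_pow]
      exact (((Nat.prime_iff_prime_int.1 hp).coprime_iff_not_dvd).2 hpm).symm.pow_right
    obtain ⟨u, hu⟩ := exists_zsmul_zsmul_eq_of_isCoprime hcop (a := c) (by rwa [natCast_zsmul])
    exact absurd ⟨n * u, by simp only [mul_smul, smul_comm u m c, hu]⟩ hb

theorem finite_of_nsmul_eq_zero (hp : p.Prime) (h : IsLocallyCyclicPrimary p A) {m : ℕ}
    (hm : m ≠ 0) (hA : ∀ a : A, m • a = 0) : Finite A := by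
  rcases h.isAddCyclic_or_isDivisible hp with hcyc | hdiv
  · exact finite_of_isAddCyclic_of_nsmul_eq_zero hm hA
  · have := hdiv.subsingleton_of_nsmul_eq_zero hm hA
    infer_instance

end IsLocallyCyclicPrimary

theorem IsPrimaryGroup.exists_nsmul_eq_zero_of_isAddCyclic {p : ℕ} {A : Type*} [AddCommGroup A]
    [IsAddCyclic A] (h : IsPrimaryGroup p A) : ∃ k : ℕ, ∀ a : A, p ^ k • a = 0 := by
  obtain ⟨z, hz⟩ := IsAddCyclic.exists_zsmul_surjective (G := A)
  obtain ⟨k, hk⟩ := h z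
  refine ⟨k, fun a => ?_⟩
  obtain ⟨n, rfl⟩ := hz a
  dsimp only
  rw [smul_comm, hk, smul_zero]

section Prufer

variable {p : ℕ}

theorem isPrimaryGroup_pruferSubgroup (p : ℕ) : IsPrimaryGroup p (pruferSubgroup p) := fun a => by
  obtain ⟨k, hk⟩ := a.2
  exact ⟨k, Subtype.ext hk⟩

theorem nsmul_coe_div_natCast {n : ℕ} (hn : n ≠ 0) (q : ℚ) :
    n • ((q / n : ℚ) : RatCircle) = (q : RatCircle) := by
  rw [← QuotientAddGroup.mk_nsmul, nsmul_eq_mul, mul_div_cancel₀ q (Nat.cast_ne_zero.2 hn)]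

theorem isDivisible_pruferSubgroup (hp : p.Prime) : IsDivisible (pruferSubgroup p) := by
  refine (isPrimaryGroup_pruferSubgroup p).isDivisible hp ?_
  rintro ⟨⟨q⟩, k, hk⟩
  have hq := nsmul_coe_div_natCast hp.ne_zero q
  refine ⟨⟨((q / p : ℚ) : RatCircle), k + 1, ?_⟩, Subtype.ext hq⟩
  rw [pow_succ, mul_smul, hq]
  exact hk

theorem exists_addOrderOf_eq_pruferSubgroup (hp : p.Prime) :
    ∃ e : pruferSubgroup p, addOrderOf e = p := by
  have : Fact p.Prime := ⟨hp⟩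
  have hp0 : (p : ℚ) ≠ 0 := Nat.cast_ne_zero.2 hp.ne_zero
  have hpe : p • ((1 / p : ℚ) : RatCircle) = 0 := by
    rw [nsmul_coe_div_natCast hp.ne_zero, QuotientAddGroup.eq_zero_iff]
    exact AddSubgroup.mem_zmultiples 1
  refine ⟨⟨((1 / p : ℚ) : RatCircle), 1, by rwa [pow_one]⟩,
    addOrderOf_eq_prime (Subtype.ext hpe) fun h => ?_⟩
  obtain ⟨n, hn⟩ := (QuotientAddGroup.eq_zero_iff (1 / p : ℚ)).1 (congrArg Subtype.val h)
  have hnp : n * (p : ℤ) = 1 := by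
    have : (n : ℚ) * p = 1 := by
      rw [← div_mul_cancel₀ 1 hp0, ← hn]
      simp only [zsmul_eq_mul, mul_one]
    exact_mod_cast this
  exact hp.one_lt.ne' (by exact_mod_cast Int.eq_one_of_mul_eq_one_left (Int.natCast_nonneg p) hnp)

theorem nontrivial_pruferSubgroup (hp : p.Prime) : Nontrivial (pruferSubgroup p) := by
  obtain ⟨e, he⟩ := exists_addOrderOf_eq_pruferSubgroup hp
  refine ⟨e, 0, fun h => hp.one_lt.ne' ?_⟩
  rw [← he, h, addOrderOf_zero]

theorem mem_zmultiples_of_nsmul_eq_zero {n : ℕ} (hn : n ≠ 0) {x : RatCircle} (hx : n • x = 0) :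
    x ∈ AddSubgroup.zmultiples ((1 / n : ℚ) : RatCircle) := by
  induction x using QuotientAddGroup.induction_on with | H q => ?_
  obtain ⟨m, hm⟩ := (QuotientAddGroup.eq_zero_iff (n • q)).1 hx
  refine ⟨m, (QuotientAddGroup.mk_zsmul ..).symm.trans (congrArg _ ?_)⟩
  simp only [zsmul_eq_mul, mul_one, nsmul_eq_mul] at hm ⊢
  rw [hm, mul_one_div, mul_div_cancel_left₀ q (Nat.cast_ne_zero.2 hn)]

theorem isLocallyCyclicPrimary_pruferSubgroup (hp : p.Prime) :
    IsLocallyCyclicPrimary p (pruferSubgroup p) := by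
  refine ⟨isPrimaryGroup_pruferSubgroup p, fun a b => ?_⟩
  obtain ⟨i, hi⟩ := a.2
  obtain ⟨j, hj⟩ := b.2
  have hn : p ^ (i + j) ≠ 0 := pow_ne_zero _ hp.ne_zero
  obtain ⟨m, hm⟩ := mem_zmultiples_of_nsmul_eq_zero hn (x := a)
    (by rw [pow_add, mul_comm, mul_smul, hi, smul_zero])
  obtain ⟨l, hl⟩ := mem_zmultiples_of_nsmul_eq_zero hn (x := b)
    (by rw [pow_add, mul_smul, hj, smul_zero])
  refine ⟨⟨((1 / (p ^ (i + j) : ℕ) : ℚ) : RatCircle), i + j, ?_⟩, ⟨m, Subtype.ext hm⟩,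
    ⟨l, Subtype.ext hl⟩⟩
  rw [nsmul_coe_div_natCast hn, QuotientAddGroup.eq_zero_iff]
  exact AddSubgroup.mem_zmultiples 1

end Prufer

/-- The possible factors of an abelian minimax group whose spectrum lies in `S`, up to passing to
subgroups and quotients. -/
def IsMinimaxFactor (S : Set ℕ) (A : Type*) [AddCommGroup A] : Prop :=
  IsAddCyclic A ∨ ∃ p ∈ S, p.Prime ∧ IsLocallyCyclicPrimary p A

namespace IsMinimaxFactor

variable {S : Set ℕ} {A B : Type*} [AddCommGroup A] [AddCommGroup B]

theorem of_injective (h : IsMinimaxFactor S B) (f : A →+ B) (hf : Injective f) :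
    IsMinimaxFactor S A :=
  h.imp (fun (_ : IsAddCyclic B) => isAddCyclic_of_injective f hf)
    fun ⟨p, hpS, hp, hB⟩ => ⟨p, hpS, hp, hB.of_injective f hf⟩

theorem of_surjective (h : IsMinimaxFactor S A) (f : A →+ B) (hf : Surjective f) :
    IsMinimaxFactor S B :=
  h.imp (fun (_ : IsAddCyclic A) => isAddCyclic_of_surjective f hf)
    fun ⟨p, hpS, hp, hA⟩ => ⟨p, hpS, hp, hA.of_surjective f hf⟩

theorem of_ker_le {P : Type*} [AddGroup P] (h : IsMinimaxFactor S A) (f : P →+ A) (g : P →+ B)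
    (hg : Surjective g) (hle : f.ker ≤ g.ker) : IsMinimaxFactor S B := by
  have hr := f.rangeRestrict_surjective
  let l : f.range →+ B := f.rangeRestrict.liftOfSurjective hr ⟨g, by rwa [f.ker_rangeRestrict]⟩
  have hl (x : P) : l (f.rangeRestrict x) = g x :=
    f.rangeRestrict.liftOfRightInverse_comp_apply _ (rightInverse_surjInv hr) ⟨g, _⟩ x
  refine (h.of_injective f.range.subtype Subtype.val_injective).of_surjective l fun b => ?_
  obtain ⟨x, rfl⟩ := hg b
  exact ⟨_, hl x⟩

theorem finite_of_nsmul_eq_zero (h : IsMinimaxFactor S A) {m : ℕ} (hm : m ≠ 0)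
    (hA : ∀ a : A, m • a = 0) : Finite A := by
  rcases h with hcyc | ⟨p, _, hp, hA'⟩
  · exact finite_of_isAddCyclic_of_nsmul_eq_zero hm hA
  · exact hA'.finite_of_nsmul_eq_zero hp hm hA

theorem finite_of_isPrimaryGroup {p : ℕ} (h : IsMinimaxFactor S A) (hp : p.Prime) (hpS : p ∉ S)
    (hA : IsPrimaryGroup p A) : Finite A := by
  rcases h with hcyc | ⟨q, hqS, hq, hA'⟩
  · obtain ⟨k, hk⟩ := hA.exists_nsmul_eq_zero_of_isAddCyclic
    exact finite_of_isAddCyclic_of_nsmul_eq_zero (pow_ne_zero k hp.ne_zero) hk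
  · refine @Finite.of_subsingleton _ (subsingleton_of_forall_eq 0 fun a => ?_)
    obtain ⟨k, hk⟩ := hA a
    obtain ⟨l, hl⟩ := hA'.isPrimaryGroup a
    have hpq : p ≠ q := fun h => hpS (h ▸ hqS)
    exact eq_zero_of_coprime_nsmul_eq_zero
      (Nat.Coprime.pow k l ((Nat.coprime_primes hp hq).2 hpq)) hk hl

theorem rank_lt_aleph0 (h : IsMinimaxFactor S A) : Module.rank ℤ A < Cardinal.aleph0 := by
  rcases h with hcyc | ⟨p, _, hp, hA⟩
  · obtain ⟨z, hz⟩ := IsAddCyclic.exists_zsmul_surjective (G := A)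
    have : Module.Finite ℤ A := .of_surjective (LinearMap.toSpanSingleton ℤ A z) hz
    exact Module.rank_lt_aleph0 ℤ A
  · have : Module.rank ℤ A = 0 := rank_eq_zero_iff.2 fun a => by
      obtain ⟨k, hk⟩ := hA.isPrimaryGroup a
      exact ⟨(p ^ k : ℕ), Nat.cast_ne_zero.2 (pow_ne_zero k hp.ne_zero), by rwa [natCast_zsmul]⟩
    rw [this]
    exact Cardinal.aleph0_pos

end IsMinimaxFactor

/-- Abelian groups with a finite series whose factors are cyclic or, for some prime in `S`, locally
cyclic and primary; these are the abelian minimax groups with spectrum in `S`. -/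
inductive AbelianMinimax (S : Set ℕ) : (A : Type u) → [AddCommGroup A] → Prop
  | of_subsingleton (A : Type u) [AddCommGroup A] [Subsingleton A] : AbelianMinimax S A
  | of_factor {A F : Type u} [AddCommGroup A] [AddCommGroup F] (f : A →+ F)
      (hF : IsMinimaxFactor S F) (hK : AbelianMinimax S f.ker) : AbelianMinimax S A

theorem IsMinimaxFactor.abelianMinimax {S : Set ℕ} {A : Type u} [AddCommGroup A]
    (h : IsMinimaxFactor S A) : AbelianMinimax S A :=
  have : Subsingleton (AddMonoidHom.id A).ker :=
    subsingleton_of_forall_eq 0 fun a => Subtype.ext a.2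
  .of_factor (.id A) h (.of_subsingleton _)

namespace AbelianMinimax

variable {S : Set ℕ} {A : Type u} [AddCommGroup A]

theorem of_injective {B : Type u} [AddCommGroup B] (h : AbelianMinimax S B) (f : A →+ B)
    (hf : Injective f) : AbelianMinimax S A := by
  induction h generalizing A with
  | of_subsingleton B =>
    have := hf.subsingleton
    exact .of_subsingleton A
  | of_factor g hF _ ih =>
    refine .of_factor (g.comp f) hF (ih ((f.comp (g.comp f).ker.subtype).codRestrict g.ker ?_) ?_)
    · exact fun x => x.2
    · exact fun x y hxy => Subtype.ext (hf (congrArg Subtype.val hxy))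

theorem addSubgroup (h : AbelianMinimax S A) (B : AddSubgroup A) : AbelianMinimax S B :=
  h.of_injective B.subtype Subtype.val_injective

theorem of_surjective {B : Type u} [AddCommGroup B] (h : AbelianMinimax S A) (f : A →+ B)
    (hf : Surjective f) : AbelianMinimax S B := by
  induction h generalizing B with
  | of_subsingleton A =>
    have := hf.subsingleton
    exact .of_subsingleton B
  | of_factor g hF _ ih =>
    let q := QuotientAddGroup.mk' (g.ker.map f)
    have hker : q.ker = g.ker.map f := QuotientAddGroup.ker_mk' _
    refine .of_factor q (hF.of_ker_le g (q.comp f)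
      ((QuotientAddGroup.mk'_surjective _).comp hf) ?_) ?_
    · rw [← AddMonoidHom.comap_ker, hker, ← AddSubgroup.map_le_iff_le_comap]
    · rw [hker]
      exact ih (f.addSubgroupMap g.ker) (f.addSubgroupMap_surjective g.ker)

theorem of_ker {X : Type u} [AddCommGroup X] (hX : AbelianMinimax S X) (f : A →+ X)
    (h : AbelianMinimax S f.ker) : AbelianMinimax S A := by
  induction hX generalizing A with
  | of_subsingleton X =>
    exact h.of_surjective f.ker.subtype fun a => ⟨⟨a, Subsingleton.elim _ _⟩, rfl⟩
  | of_factor g hF _ ih =>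
    let f' : (g.comp f).ker →+ g.ker := (f.comp (g.comp f).ker.subtype).codRestrict g.ker (·.2)
    have hf' (x : f'.ker) : f x = 0 := congrArg Subtype.val x.2
    refine .of_factor (g.comp f) hF (ih f' (h.of_injective
      (((g.comp f).ker.subtype.comp f'.ker.subtype).codRestrict f.ker hf') ?_))
    exact fun x y hxy => Subtype.ext (Subtype.ext (congrArg (fun z : f.ker => (z : A)) hxy))

theorem finite_of_nsmul_eq_zero (h : AbelianMinimax S A) {m : ℕ} (hm : m ≠ 0)
    (hA : ∀ a : A, m • a = 0) : Finite A := by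
  induction h with
  | of_subsingleton A => infer_instance
  | of_factor f hF _ ih =>
    have := ih fun a => Subtype.ext (hA a)
    have := (hF.of_injective f.range.subtype Subtype.val_injective).finite_of_nsmul_eq_zero hm
      fun ⟨_, a, ha⟩ => Subtype.ext (by simp [← ha, ← map_nsmul, hA])
    exact finite_of_finite_ker f

theorem finite_of_isPrimaryGroup {p : ℕ} (h : AbelianMinimax S A) (hp : p.Prime) (hpS : p ∉ S)
    (hA : IsPrimaryGroup p A) : Finite A := by
  induction h with
  | of_subsingleton A => infer_instance
  | of_factor f hF _ ih =>
    have := ih (hA.of_injective f.ker.subtype Subtype.val_injective)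
    have := (hF.of_injective f.range.subtype Subtype.val_injective).finite_of_isPrimaryGroup hp hpS
      (hA.of_surjective f.rangeRestrict f.rangeRestrict_surjective)
    exact finite_of_finite_ker f

theorem finite_setOf_nsmul_eq_zero (h : AbelianMinimax S A) {m : ℕ} (hm : m ≠ 0) :
    {a : A | m • a = 0}.Finite := by
  have := (h.addSubgroup (nsmulAddMonoidHom m : A →+ A).ker).finite_of_nsmul_eq_zero hm
    fun a => Subtype.ext a.2
  exact Set.toFinite ((nsmulAddMonoidHom m : A →+ A).ker : Set A)

theorem rank_lt_aleph0 (h : AbelianMinimax S A) : Module.rank ℤ A < Cardinal.aleph0 := by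
  induction h with
  | of_subsingleton A =>
    rw [rank_subsingleton']
    exact Cardinal.aleph0_pos
  | of_factor f hF _ ih =>
    rw [← f.toIntLinearMap.rank_range_add_rank_ker]
    exact Cardinal.add_lt_aleph0
      ((Submodule.rank_le f.toIntLinearMap.range).trans_lt hF.rank_lt_aleph0) ih

theorem finiteRankAbelian (h : AbelianMinimax S A) : FiniteRankAbelian A := by
  refine ⟨?_, fun p hp => h.finite_setOf_nsmul_eq_zero hp.ne_zero⟩
  obtain ⟨n, hn⟩ := Cardinal.lt_aleph0.1 h.rank_lt_aleph0
  refine ⟨n, fun k ⟨f, hf⟩ => ?_⟩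
  have hle := f.toIntLinearMap.lift_rank_le_of_injective hf
  rw [hn, rank_finsupp_self] at hle
  simpa using hle

theorem addSpectrum_subset (h : AbelianMinimax S A) : addSpectrum A ⊆ S := by
  rintro p ⟨hp, H, K, _, ⟨e⟩⟩
  by_contra hpS
  let e' : Additive (H ⧸ K) ≃+ pruferSubgroup p := e.toAdditiveLeft
  have hH : AbelianMinimax S (Additive H) :=
    h.of_injective (MonoidHom.toAdditiveLeft H.subtype) Subtype.val_injective
  have hQ : AbelianMinimax S (Additive (H ⧸ K)) :=
    hH.of_surjective (QuotientGroup.mk' K).toAdditive (QuotientGroup.mk'_surjective K)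
  have := hQ.finite_of_isPrimaryGroup hp hpS
    ((isPrimaryGroup_pruferSubgroup p).of_injective e'.toAddMonoidHom e'.injective)
  have := Finite.of_equiv _ e'.toEquiv
  have := nontrivial_pruferSubgroup hp
  exact not_subsingleton _ ((isDivisible_pruferSubgroup hp).subsingleton_of_nsmul_eq_zero
    Nat.card_pos.ne' fun a => card_nsmul_eq_zero')

end AbelianMinimax

/-- Every abelian section of `G` is minimax with spectrum in `S`. -/
def HasMinimaxAbelianSections (S : Set ℕ) (G : Type u) [Group G] : Prop :=
  ∀ (H : Subgroup G) (A : Type u) [AddCommGroup A] (f : H →* Multiplicative A),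
    Surjective f → AbelianMinimax S A

theorem IsMinimax.exists_isMinimaxFactor_hom {G : Type u} [Group G] {C D : Subgroup G}
    [hN : (C.subgroupOf D).Normal]
    (h : IsCyclic (D ⧸ C.subgroupOf D) ∨ ∃ p : ℕ, p.Prime ∧
      Nonempty ((D ⧸ C.subgroupOf D) ≃* Multiplicative (pruferSubgroup p))) :
    ∃ (F : Type u) (_ : AddCommGroup F) (π : D →* Multiplicative F),
      IsMinimaxFactor (groupSpectrum G) F ∧ π.ker = C.subgroupOf D := by
  rcases h with hcyc | ⟨p, hp, ⟨e⟩⟩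
  · let := IsCyclic.commGroup (α := D ⧸ C.subgroupOf D)
    exact ⟨Additive (D ⧸ C.subgroupOf D), inferInstance, QuotientGroup.mk' (C.subgroupOf D),
      .inl inferInstance, QuotientGroup.ker_mk' _⟩
  · let : CommGroup (D ⧸ C.subgroupOf D) :=
      { mul_comm x y := e.injective (by rw [map_mul, map_mul, mul_comm]) }
    exact ⟨Additive (D ⧸ C.subgroupOf D), inferInstance, QuotientGroup.mk' (C.subgroupOf D),
      .inr ⟨p, ⟨hp, D, _, hN, ⟨e⟩⟩, hp, (isLocallyCyclicPrimary_pruferSubgroup hp).of_injective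
        e.toAdditiveLeft.toAddMonoidHom e.injective⟩, QuotientGroup.ker_mk' _⟩

theorem IsMinimax.hasMinimaxAbelianSections {G : Type u} [Group G] (h : IsMinimax G) :
    HasMinimaxAbelianSections (groupSpectrum G) G := by
  obtain ⟨r, c, -, h0, hlast, hc⟩ := h
  suffices key : ∀ (i : Fin (r + 1)) (P A : Type u) [Group P] [AddCommGroup A] (j : P →* G)
      (f : P →* Multiplicative A), j.range ≤ c i → j.ker ≤ f.ker → Surjective f →
      AbelianMinimax (groupSpectrum G) A by
    intro H A _ f hf
    refine key (Fin.last r) H A H.subtype f (hlast ▸ le_top) ?_ hf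
    rw [H.ker_subtype]
    exact bot_le
  intro i
  induction i using Fin.induction with
  | zero =>
    intro P A _ _ j f hj hle hf
    have : Subsingleton A := subsingleton_of_forall_eq 0 fun a => by
      obtain ⟨x, hx⟩ := hf (.ofAdd a)
      rw [h0, le_bot_iff, MonoidHom.range_eq_bot_iff] at hj
      have hxj : x ∈ j.ker := by rw [hj]; rfl
      exact hx.symm.trans (hle hxj)
    exact .of_subsingleton A
  | succ i ih =>
    intro P A _ _ j f hj hle hf
    obtain ⟨_, hi⟩ := hc i
    obtain ⟨F, _, π, hF, hker⟩ := IsMinimax.exists_isMinimaxFactor_hom hi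
    let g : P →* Multiplicative F := π.comp (j.codRestrict (c i.succ) fun x => hj ⟨x, rfl⟩)
    have hg (x : P) : x ∈ g.ker ↔ j x ∈ c i.castSucc := by
      rw [← MonoidHom.comap_ker, hker]
      rfl
    let B : AddSubgroup A := (g.ker.map f).toAddSubgroup'
    let q := QuotientAddGroup.mk' B
    refine .of_factor q (hF.of_ker_le (MonoidHom.toAdditiveLeft g)
      (q.comp (MonoidHom.toAdditiveLeft f)) ((QuotientAddGroup.mk'_surjective B).comp hf) ?_) ?_
    · intro x hx
      exact (QuotientAddGroup.eq_zero_iff _).2 ⟨x, hx, rfl⟩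
    · rw [QuotientAddGroup.ker_mk']
      refine ih g.ker B (j.comp g.ker.subtype) (f.subgroupMap g.ker) ?_ ?_
        (f.subgroupMap_surjective g.ker)
      · rintro _ ⟨x, rfl⟩
        exact (hg x).1 x.2
      · intro x hx
        exact Subtype.ext (hle hx)

theorem IsDivisible.tensorProduct_eq_zero {A B : Type*} [AddCommGroup A] [AddCommGroup B]
    (hA : IsDivisible A) {q : ℕ} (hq : q ≠ 0) (hB : IsPrimaryGroup q B) (t : A ⊗[ℤ] B) :
    t = 0 := by
  induction t with
  | zero => rfl
  | add s t hs ht => rw [hs, ht, add_zero]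
  | tmul a b =>
    obtain ⟨k, hk⟩ := hB b
    obtain ⟨a, rfl⟩ := hA (q ^ k) (pow_ne_zero k hq) a
    rw [TensorProduct.smul_tmul, hk, TensorProduct.tmul_zero]

namespace AbelianMinimax

variable {S : Set ℕ} {A B : Type u} [AddCommGroup A] [AddCommGroup B]

theorem tensor_of_isAddCyclic [IsAddCyclic A] (hB : AbelianMinimax S B) :
    AbelianMinimax S (A ⊗[ℤ] B) := by
  obtain ⟨z, hz⟩ := IsAddCyclic.exists_zsmul_surjective (G := A)
  refine hB.of_surjective (TensorProduct.mk ℤ A B z).toAddMonoidHom fun t => ?_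
  induction t with
  | zero => exact ⟨0, TensorProduct.tmul_zero _ _⟩
  | add s t hs ht =>
    obtain ⟨x, rfl⟩ := hs
    obtain ⟨y, rfl⟩ := ht
    exact ⟨x + y, TensorProduct.tmul_add z x y⟩
  | tmul a b =>
    obtain ⟨k, rfl⟩ := hz a
    exact ⟨k • b, (TensorProduct.smul_tmul k z b).symm⟩

theorem tensor_comm (h : AbelianMinimax S (A ⊗[ℤ] B)) : AbelianMinimax S (B ⊗[ℤ] A) :=
  h.of_surjective (TensorProduct.comm ℤ A B).toLinearMap.toAddMonoidHom
    (TensorProduct.comm ℤ A B).surjective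

theorem tensor_of_ker {F : Type u} [AddCommGroup F] (f : A →+ F)
    (hK : AbelianMinimax S (f.ker ⊗[ℤ] B)) (hR : AbelianMinimax S (f.range ⊗[ℤ] B)) :
    AbelianMinimax S (A ⊗[ℤ] B) := by
  let i : f.ker →ₗ[ℤ] A := f.ker.subtype.toIntLinearMap
  let g : A →ₗ[ℤ] f.range := f.rangeRestrict.toIntLinearMap
  have hig : Exact i g := fun a =>
    ⟨fun ha => ⟨⟨a, congrArg Subtype.val ha⟩, rfl⟩, by rintro ⟨a, rfl⟩; exact Subtype.ext a.2⟩
  have hex := rTensor_exact B hig f.rangeRestrict_surjective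
  refine hR.of_ker (g.rTensor B).toAddMonoidHom (hK.of_surjective
    ((i.rTensor B).toAddMonoidHom.codRestrict _ fun x => (hex _).2 ⟨x, rfl⟩) ?_)
  rintro ⟨y, hy⟩
  obtain ⟨x, hx⟩ := (hex y).1 hy
  exact ⟨x, Subtype.ext hx⟩

end AbelianMinimax

namespace IsMinimaxFactor

variable {S : Set ℕ} {A B : Type u} [AddCommGroup A] [AddCommGroup B]

theorem tensor (hA : IsMinimaxFactor S A) (hB : IsMinimaxFactor S B) :
    AbelianMinimax S (A ⊗[ℤ] B) := by
  rcases hB with hBc | ⟨q, hqS, hq, hBq⟩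
  · exact (AbelianMinimax.tensor_of_isAddCyclic hA.abelianMinimax).tensor_comm
  have hB' : AbelianMinimax S B := IsMinimaxFactor.abelianMinimax (.inr ⟨q, hqS, hq, hBq⟩)
  rcases hA with hAc | ⟨p, -, hp, hAp⟩
  · exact .tensor_of_isAddCyclic hB'
  rcases hAp.isAddCyclic_or_isDivisible hp with hAc | hAd
  · exact .tensor_of_isAddCyclic hB'
  · have : Subsingleton (A ⊗[ℤ] B) :=
      subsingleton_of_forall_eq 0 (hAd.tensorProduct_eq_zero hq.ne_zero hBq.isPrimaryGroup)
    exact .of_subsingleton _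

theorem tensor_abelianMinimax (hA : IsMinimaxFactor S A) (hB : AbelianMinimax S B) :
    AbelianMinimax S (A ⊗[ℤ] B) := by
  induction hB with
  | of_subsingleton B =>
    exact (AbelianMinimax.tensor_of_isAddCyclic hA.abelianMinimax).tensor_comm
  | of_factor f hF _ ih =>
    have hR := hF.of_injective f.range.subtype Subtype.val_injective
    exact (AbelianMinimax.tensor_of_ker f ih.tensor_comm (hR.tensor hA)).tensor_comm

end IsMinimaxFactor

theorem AbelianMinimax.tensor {S : Set ℕ} {A B : Type u} [AddCommGroup A] [AddCommGroup B]
    (hA : AbelianMinimax S A) (hB : AbelianMinimax S B) : AbelianMinimax S (A ⊗[ℤ] B) := by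
  induction hA with
  | of_subsingleton A =>
    exact .tensor_of_isAddCyclic hB
  | of_factor f hF _ ih =>
    exact .tensor_of_ker f ih
      ((hF.of_injective f.range.subtype Subtype.val_injective).tensor_abelianMinimax hB)

/-! ### Strongly irreducible representations of solvable groups -/

section WeightSpaces

variable {K M ι : Type*} [Field K] [AddCommGroup M] [Module K M] [FiniteDimensional K M]
  {f : ι → End K M}

theorem finite_setOf_iInf_eigenspace_ne_bot (hf : ∀ i j, Commute (f i) (f j)) :
    {χ : ι → K | ⨅ i, (f i).eigenspace (χ i) ≠ ⊥}.Finite := by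
  have h := End.independent_iInf_maxGenEigenspace_of_forall_mapsTo f
    fun i j φ => End.mapsTo_maxGenEigenspace_of_comm (hf j i) φ
  have h' : iSupIndep fun χ : ι → K => ⨅ i, (f i).eigenspace (χ i) :=
    h.mono fun χ => iInf_mono fun i => ((f i).genEigenspace (χ i)).monotone le_top
  exact WellFoundedGT.finite_ne_bot_of_iSupIndep h'

theorem exists_iInf_eigenspace_ne_bot [IsAlgClosed K] [Nontrivial M]
    (hf : ∀ i j, Commute (f i) (f j)) : ∃ χ : ι → K, ⨅ i, (f i).eigenspace (χ i) ≠ ⊥ := by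
  let A := Algebra.adjoin K (Set.range f)
  have : IsMulCommutative A := Algebra.isMulCommutative_adjoin K <| by
    rintro _ ⟨i, rfl⟩ _ ⟨j, rfl⟩
    exact hf i j
  have : IsArtinian A M := isArtinian_of_tower K inferInstance
  obtain ⟨W, hW⟩ := IsAtomic.exists_atom (Submodule A M)
  have := isSimpleModule_iff_isAtom.2 hW
  have : FiniteDimensional K W :=
    FiniteDimensional.finiteDimensional_submodule (W.restrictScalars K)
  have h1 : finrank K (W.restrictScalars K) = 1 :=
    IsSimpleModule.finrank_eq_one_of_isMulCommutative A W K
  obtain ⟨w, hw0, hw⟩ := finrank_eq_one_iff'.1 h1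
  have hmem (i : ι) : f i w ∈ W :=
    W.smul_mem (⟨f i, Algebra.subset_adjoin ⟨i, rfl⟩⟩ : A) w.2
  choose χ hχ using fun i => hw ⟨f i w, hmem i⟩
  refine ⟨χ, (Submodule.ne_bot_iff _).2 ⟨w, ?_, fun h => hw0 (Subtype.ext h)⟩⟩
  simp only [Submodule.mem_iInf, End.mem_eigenspace_iff]
  exact fun i => (congrArg Subtype.val (hχ i)).symm

end WeightSpaces

section StronglyIrreducible

variable {K V Γ : Type*} [Field K] [AddCommGroup V] [Module K V] [Group Γ]

/-- A representation is strongly irreducible if the only subspaces with a finite orbit are `⊥` and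
`⊤`, that is, if its restriction to every subgroup of finite index is irreducible (or zero). -/
def IsStronglyIrreducible (ρ : Representation K Γ V) : Prop :=
  ∀ W : Submodule K V, (Set.range fun g => W.map (ρ g)).Finite → W = ⊥ ∨ W = ⊤

variable {ρ : Representation K Γ V}

theorem ne_zero_of_representation [Nontrivial V] (ρ : Representation K Γ V) (g : Γ) : ρ g ≠ 0 :=
  ((Group.isUnit g).map ρ).ne_zero

theorem map_eigenspace_representation (ρ : Representation K Γ V) (g h : Γ) (c : K) :
    (End.eigenspace (ρ h) c).map (ρ g) = End.eigenspace (ρ (g * h * g⁻¹)) c := by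
  ext v
  simp only [Submodule.mem_map, End.mem_eigenspace_iff, map_mul, End.mul_apply]
  constructor
  · rintro ⟨v, hv, rfl⟩
    rw [ρ.inv_self_apply, hv, map_smul]
  · intro hv
    refine ⟨ρ g⁻¹ v, ?_, ρ.self_inv_apply g v⟩
    rw [← map_smul, ← hv, ρ.inv_self_apply]

/-- The kernel of the conjugation action of `Γ` on `End K V`, a normal subgroup. By Schur's lemma
it consists of the elements which act as scalars. -/
abbrev scalarSubgroup (ρ : Representation K Γ V) : Subgroup Γ :=
  MonoidHom.ker (ρ.linHom ρ)

theorem mem_scalarSubgroup_iff {g : Γ} : g ∈ scalarSubgroup ρ ↔ ∃ c : K, ρ g = c • 1 := by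
  constructor
  · intro hg
    have hc : ρ g ∈ Subalgebra.center K (End K V) := Subalgebra.mem_center_iff.2 fun T => by
      have h : ρ g * T * ρ g⁻¹ = T := DFunLike.congr_fun hg T
      calc T * ρ g = ρ g * T * (ρ g⁻¹ * ρ g) := by rw [← mul_assoc, h]
        _ = ρ g * T := by rw [← map_mul, inv_mul_cancel, map_one, mul_one]
    rw [Algebra.IsCentral.center_eq_bot] at hc
    obtain ⟨c, hc⟩ := hc
    exact ⟨c, hc.symm.trans (Algebra.algebraMap_eq_smul_one c)⟩
  · rintro ⟨c, hc⟩
    ext T : 1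
    calc ρ g * T * ρ g⁻¹ = T * (ρ g * ρ g⁻¹) := by rw [hc]; simp
      _ = T := by rw [← map_mul, mul_inv_cancel, map_one, mul_one]

namespace IsStronglyIrreducible

theorem eq_top_of_finite (h : IsStronglyIrreducible ρ) {W : Submodule K V} (hW : W ≠ ⊥)
    {s : Set (Submodule K V)} (hs : s.Finite) (hsW : ∀ g, W.map (ρ g) ∈ s) : W = ⊤ :=
  (h W (hs.subset (Set.range_subset_iff.2 hsW))).resolve_left hW

variable [IsAlgClosed K] [FiniteDimensional K V] [Nontrivial V]

theorem le_scalarSubgroup_of_commutator_le_ker (h : IsStronglyIrreducible ρ) {Z : Subgroup Γ}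
    [Z.Normal] (hZ : ⁅Z, Z⁆ ≤ MonoidHom.ker ρ) : Z ≤ scalarSubgroup ρ := by
  have hcomm (x y : Z) : Commute (ρ x) (ρ y) := by
    have hxy : ρ ⁅(x : Γ), (y : Γ)⁆ = 1 := hZ (Subgroup.commutator_mem_commutator x.2 y.2)
    calc ρ x * ρ y = ρ ⁅(x : Γ), (y : Γ)⁆ * (ρ y * ρ x) := by
          simp only [← map_mul, commutatorElement_def]; group
      _ = ρ y * ρ x := by rw [hxy, one_mul]
  let E (χ : Z → K) : Submodule K V := ⨅ z : Z, End.eigenspace (ρ z) (χ z)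
  obtain ⟨χ, hχ⟩ : ∃ χ, E χ ≠ ⊥ := exists_iInf_eigenspace_ne_bot hcomm
  have hmap (g : Γ) : (E χ).map (ρ g) = E fun z => χ (MulAut.conjNormal g⁻¹ z) := by
    simp only [E, Submodule.map_iInf (ρ g) (ρ.apply_bijective g).1, map_eigenspace_representation]
    refine (MulAut.conjNormal g).toEquiv.iInf_congr fun z => ?_
    rw [map_inv]
    simp
  have htop : E χ = ⊤ := h.eq_top_of_finite hχ
    ((finite_setOf_iInf_eigenspace_ne_bot hcomm).image E) fun g => by
      refine ⟨_, ?_, (hmap g).symm⟩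
      change E _ ≠ ⊥
      rw [← hmap g, ← Submodule.map_bot (ρ g)]
      exact (Submodule.map_injective_of_injective (ρ.apply_bijective g).1).ne hχ
  intro z hz
  refine mem_scalarSubgroup_iff.2 ⟨χ ⟨z, hz⟩, LinearMap.ext fun v => ?_⟩
  have hv : v ∈ E χ := htop ▸ Submodule.mem_top
  exact End.mem_eigenspace_iff.1 ((Submodule.mem_iInf _).1 hv ⟨z, hz⟩)

theorem mem_scalarSubgroup_of_forall_commute (h : IsStronglyIrreducible ρ) {N : Subgroup Γ}
    [N.Normal] {z : Γ} (hz : z ∈ N) (hzN : ∀ x ∈ N, ρ x * ρ z = ρ z * ρ x) :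
    z ∈ scalarSubgroup ρ := by
  let q := QuotientGroup.mk' (MonoidHom.ker ρ)
  have hker {x : Γ} : q x = 1 ↔ ρ x = 1 := QuotientGroup.eq_one_iff x
  have : (N.map q).Normal := .map inferInstance q (QuotientGroup.mk'_surjective _)
  have hZ : ⁅N ⊓ (Subgroup.centralizer (N.map q : Set _)).comap q,
      N ⊓ (Subgroup.centralizer (N.map q : Set _)).comap q⁆ ≤ MonoidHom.ker ρ :=
    Subgroup.commutator_le.2 fun x hx y hy => hker.1 <| by
      rw [map_commutatorElement, commutatorElement_eq_one_iff_mul_comm]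
      exact Subgroup.mem_centralizer_iff.1 hy.2 _ ⟨x, hx.1, rfl⟩
  refine h.le_scalarSubgroup_of_commutator_le_ker hZ ⟨hz, Subgroup.mem_centralizer_iff.2 ?_⟩
  rintro _ ⟨x, hx, rfl⟩
  rw [← commutatorElement_eq_one_iff_mul_comm, ← map_commutatorElement, hker, commutatorElement_def,
    map_mul, map_mul, map_mul, hzN x hx, ← map_mul, ← map_mul, ← map_mul]
  simp

theorem exists_finite_mul_mem_scalarSubgroup (h : IsStronglyIrreducible ρ) {N : Subgroup Γ}
    [N.Normal] (hN : ⁅N, N⁆ ≤ scalarSubgroup ρ) :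
    ∃ s : Set N, s.Finite ∧ ∀ n : N, ∃ m ∈ s, (m : Γ)⁻¹ * n ∈ scalarSubgroup ρ := by
  let φ := ρ.linHom ρ
  have hφ (x y : N) : φ ⁅(x : Γ), (y : Γ)⁆ = 1 := hN (Subgroup.commutator_mem_commutator x.2 y.2)
  have hcomm (x y : N) : Commute (φ x) (φ y) := by
    calc φ x * φ y = φ ⁅(x : Γ), (y : Γ)⁆ * (φ y * φ x) := by
          simp only [← map_mul, commutatorElement_def]; group
      _ = φ y * φ x := by rw [hφ, one_mul]
  have hweight (m x : N) : ∃ c : K, φ x (ρ m) = c • ρ m := by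
    obtain ⟨c, hc⟩ := mem_scalarSubgroup_iff.1 (hN (Subgroup.commutator_mem_commutator x.2 m.2))
    refine ⟨c, ?_⟩
    calc ρ x * ρ m * ρ x⁻¹ = ρ ⁅(x : Γ), (m : Γ)⁆ * ρ m := by
          simp only [← map_mul, commutatorElement_def]; group
      _ = c • ρ m := by rw [hc, smul_one_mul]
  choose χ hχ using hweight
  have hfin : (Set.range χ).Finite := by
    refine (finite_setOf_iInf_eigenspace_ne_bot hcomm).subset (Set.range_subset_iff.2 fun m => ?_)
    refine (Submodule.ne_bot_iff _).2 ⟨ρ m, ?_, ne_zero_of_representation ρ m⟩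
    simpa only [Submodule.mem_iInf, End.mem_eigenspace_iff] using hχ m
  obtain ⟨s, -, hs⟩ := Set.exists_subset_bijOn Set.univ χ
  refine ⟨s, hs.finite_iff_finite.2 (by rwa [Set.image_univ]), fun n => ?_⟩
  obtain ⟨m, hm, hmn⟩ := hs.surjOn ⟨n, trivial, rfl⟩
  refine ⟨m, hm, h.mem_scalarSubgroup_of_forall_commute (N.mul_mem (N.inv_mem m.2) n.2) ?_⟩
  intro x hx
  have hconj : ρ (x * m * x⁻¹) * ρ (x * ((m : Γ)⁻¹ * n) * x⁻¹) =
      ρ (x * m * x⁻¹) * ρ ((m : Γ)⁻¹ * n) := by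
    have hm' : ρ (x * m * x⁻¹) = χ m ⟨x, hx⟩ • ρ m := by
      rw [← hχ, map_mul, map_mul]; rfl
    calc ρ (x * m * x⁻¹) * ρ (x * ((m : Γ)⁻¹ * n) * x⁻¹) = ρ x * ρ n * ρ x⁻¹ := by
          simp only [← map_mul]; group
      _ = χ m ⟨x, hx⟩ • ρ n := hmn ▸ hχ n ⟨x, hx⟩
      _ = ρ (x * m * x⁻¹) * ρ ((m : Γ)⁻¹ * n) := by
          rw [hm', smul_mul_assoc, ← map_mul, mul_inv_cancel_left]
  have hcancel := ((Group.isUnit (x * m * x⁻¹)).map ρ).mul_left_cancel hconj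
  calc ρ x * ρ ((m : Γ)⁻¹ * n) = ρ (x * ((m : Γ)⁻¹ * n) * x⁻¹) * ρ x := by
        simp only [← map_mul]; group
    _ = ρ ((m : Γ)⁻¹ * n) * ρ x := by rw [hcancel]

theorem le_scalarSubgroup_of_commutator_le (h : IsStronglyIrreducible ρ) {N : Subgroup Γ}
    [N.Normal] (hN : ⁅N, N⁆ ≤ scalarSubgroup ρ) : N ≤ scalarSubgroup ρ := by
  obtain ⟨s, hs, hsN⟩ := h.exists_finite_mul_mem_scalarSubgroup hN
  intro m hm
  obtain ⟨c, hc⟩ := End.exists_eigenvalue (ρ m)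
  -- multiplication by a scalar does not change the set of eigenspaces
  let E (T : End K V) : Set (Submodule K V) := Set.range T.eigenspace
  have hE (T : End K V) : (E T).Finite := by
    refine ((T.finite_hasEigenvalue.image T.eigenspace).insert ⊥).subset ?_
    rintro _ ⟨μ, rfl⟩
    exact or_iff_not_imp_left.2 fun hμ => ⟨μ, hμ, rfl⟩
  have htop : End.eigenspace (ρ m) c = ⊤ :=
    h.eq_top_of_finite hc (hs.biUnion fun n _ => hE (ρ n)) fun g => by
      obtain ⟨n, hn, hng⟩ := hsN ⟨g * m * g⁻¹, Subgroup.Normal.conj_mem inferInstance m hm g⟩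
      obtain ⟨d, hd⟩ := mem_scalarSubgroup_iff.1 hng
      have hd0 : d ≠ 0 := by
        rintro rfl
        exact ne_zero_of_representation ρ _ (hd.trans (zero_smul K 1))
      have hgn : ρ (g * m * g⁻¹) = d • ρ n := by
        rw [← mul_inv_cancel_left (n : Γ) (g * m * g⁻¹), map_mul, hd, mul_smul_comm, mul_one]
      refine Set.mem_biUnion hn ⟨d⁻¹ * c, ?_⟩
      ext v
      rw [map_eigenspace_representation, hgn, End.mem_eigenspace_iff, End.mem_eigenspace_iff,
        LinearMap.smul_apply, mul_smul, eq_inv_smul_iff₀ hd0]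
  exact mem_scalarSubgroup_iff.2 ⟨c, LinearMap.ext fun v =>
    End.mem_eigenspace_iff.1 (htop ▸ Submodule.mem_top)⟩

theorem scalarSubgroup_eq_top [Group.IsSolvable Γ] (h : IsStronglyIrreducible ρ) :
    scalarSubgroup ρ = ⊤ := by
  obtain ⟨n, hn⟩ := Group.IsSolvable.solvable (G := Γ)
  suffices key : ∀ k, derivedSeries Γ k ≤ scalarSubgroup ρ → scalarSubgroup ρ = ⊤ from
    key n (hn ▸ bot_le)
  intro k
  induction k with
  | zero => exact top_le_iff.1
  | succ k ih => exact fun hk => ih (h.le_scalarSubgroup_of_commutator_le hk)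

end IsStronglyIrreducible

end StronglyIrreducible

/-! ### Virtually triangular representations -/

section Unipotent

variable {R₁ R₂ R₃ Γ A B C : Type*} [CommRing R₁] [CommRing R₂] [CommRing R₃] [Group Γ]
  [AddCommGroup A] [AddCommGroup B] [AddCommGroup C] [Module R₁ A] [Module R₂ B] [Module R₃ C]
  {ρ : Representation R₁ Γ A} {σ : Representation R₂ Γ B} {τ : Representation R₃ Γ C}
  {M N : Subgroup Γ} {m n : ℕ}

/-- `N` acts on `A` unipotently of class at most `n`: every product of `n` operators `g - 1` with
`g ∈ N` vanishes. -/
def IsUnipotentOn (ρ : Representation R₁ Γ A) (N : Subgroup Γ) (n : ℕ) : Prop :=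
  ∀ l : List Γ, l.length = n → (∀ g ∈ l, g ∈ N) → (l.map fun g => ρ g - 1).prod = 0

/-- Some subgroup of finite index in `Γ` has a derived subgroup acting unipotently. For linear
representations over an algebraically closed field this is what the Lie–Kolchin–Mal'cev theorem
provides: a subgroup of finite index acts by triangular matrices. -/
def IsVirtuallyTriangular (ρ : Representation R₁ Γ A) : Prop :=
  ∃ H : Subgroup Γ, H.FiniteIndex ∧ ∃ n, IsUnipotentOn ρ ⁅H, H⁆ n

theorem map_prod_sub_one_apply (f : A →+ B) (hf : ∀ g a, f (ρ g a) = σ g (f a)) (l : List Γ)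
    (a : A) : f ((l.map fun g => ρ g - 1).prod a) = (l.map fun g => σ g - 1).prod (f a) := by
  induction l with
  | nil => rfl
  | cons g l ih =>
    simp only [List.map_cons, List.prod_cons, End.mul_apply, LinearMap.sub_apply, End.one_apply,
      map_sub, hf, ih]

theorem IsUnipotentOn.mono (h : IsUnipotentOn ρ N n) (hM : M ≤ N) (hnm : n ≤ m) :
    IsUnipotentOn ρ M m := by
  intro l hl hlM
  rw [← List.take_append_drop n l, List.map_append, List.prod_append, h, zero_mul]
  · rw [List.length_take, hl, min_eq_left hnm]
  · exact fun g hg => hM (hlM g (List.mem_of_mem_take hg))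

theorem IsUnipotentOn.of_exact (hB : IsUnipotentOn σ N n) (hC : IsUnipotentOn τ N m) (i : B →+ A)
    (q : A →+ C) (hi : ∀ g b, i (σ g b) = ρ g (i b)) (hq : ∀ g a, q (ρ g a) = τ g (q a))
    (hex : ∀ a, q a = 0 → a ∈ Set.range i) : IsUnipotentOn ρ N (n + m) := by
  intro l hl hlN
  ext a
  obtain ⟨b, hb⟩ := hex (((l.drop n).map fun g => ρ g - 1).prod a) <| by
    rw [map_prod_sub_one_apply q hq, hC, LinearMap.zero_apply]
    · rw [List.length_drop, hl, Nat.add_sub_cancel_left]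
    · exact fun g hg => hlN g (List.mem_of_mem_drop hg)
  rw [← List.take_append_drop n l, List.map_append, List.prod_append, End.mul_apply, ← hb,
    ← map_prod_sub_one_apply i hi, hB, LinearMap.zero_apply, map_zero, LinearMap.zero_apply]
  · rw [List.length_take, hl, min_eq_left (Nat.le_add_right n m)]
  · exact fun g hg => hlN g (List.mem_of_mem_take hg)

namespace IsVirtuallyTriangular

theorem of_exact (hB : IsVirtuallyTriangular σ) (hC : IsVirtuallyTriangular τ) (i : B →+ A)
    (q : A →+ C) (hi : ∀ g b, i (σ g b) = ρ g (i b)) (hq : ∀ g a, q (ρ g a) = τ g (q a))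
    (hex : ∀ a, q a = 0 → a ∈ Set.range i) : IsVirtuallyTriangular ρ := by
  obtain ⟨H, _, n, hn⟩ := hB
  obtain ⟨K, _, m, hm⟩ := hC
  exact ⟨H ⊓ K, inferInstance, n + m, .of_exact
    (hn.mono (Subgroup.commutator_mono inf_le_left inf_le_left) le_rfl)
    (hm.mono (Subgroup.commutator_mono inf_le_right inf_le_right) le_rfl) i q hi hq hex⟩

theorem of_injective (h : IsVirtuallyTriangular σ) (f : A →+ B) (hf : Injective f)
    (he : ∀ g a, f (ρ g a) = σ g (f a)) : IsVirtuallyTriangular ρ := by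
  obtain ⟨H, hH, n, hn⟩ := h
  refine ⟨H, hH, n, fun l hl hlH => LinearMap.ext fun a => hf ?_⟩
  rw [map_prod_sub_one_apply f he, hn l hl hlH, LinearMap.zero_apply, LinearMap.zero_apply,
    map_zero]

theorem of_commutator_le_ker (H : Subgroup Γ) [hH : H.FiniteIndex]
    (h : ⁅H, H⁆ ≤ MonoidHom.ker ρ) : IsVirtuallyTriangular ρ := by
  refine ⟨H, hH, 1, fun l hl hlH => ?_⟩
  obtain ⟨g, rfl⟩ := List.length_eq_one_iff.1 hl
  have hg : ρ g = 1 := h (hlH g List.mem_cons_self)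
  simp [hg]

theorem of_finite [Finite A] : IsVirtuallyTriangular ρ := by
  have : Finite (A →ₗ[R₁] A) := Finite.of_injective _ DFunLike.coe_injective
  have : ρ.asGroupHom.ker.FiniteIndex := inferInstance
  have hker : ρ.asGroupHom.ker ≤ MonoidHom.ker ρ := fun g hg => congrArg Units.val hg
  exact of_commutator_le_ker ρ.asGroupHom.ker ((Subgroup.commutator_le_left _ _).trans hker)

theorem of_finiteIndex (H : Subgroup Γ) [hH : H.FiniteIndex]
    (h : IsVirtuallyTriangular (MonoidHom.comp ρ H.subtype : Representation R₁ H A)) :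
    IsVirtuallyTriangular ρ := by
  obtain ⟨K, hK, n, hn⟩ := h
  refine ⟨K.map H.subtype, ⟨?_⟩, n, fun l hl hlK => ?_⟩
  · rw [Subgroup.index_map_subtype]
    exact mul_ne_zero hK.index_ne_zero hH.index_ne_zero
  · rw [← Subgroup.map_commutator] at hlK
    obtain ⟨l, rfl⟩ : l ∈ Set.range (List.map H.subtype) := by
      rw [Set.range_list_map]
      exact fun g hg => (Subgroup.map_le_range _ _) (hlK g hg)
    rw [List.map_map]
    refine hn l ((List.length_map _).symm.trans hl) fun g hg => ?_
    exact (Subgroup.mem_map_iff_mem H.subtype_injective).1 (hlK g (List.mem_map_of_mem hg))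

end IsVirtuallyTriangular

end Unipotent

section LieKolchinMalcev

theorem exists_finiteIndex_forall_le_comap {K V Γ : Type*} [CommRing K] [AddCommGroup V]
    [Module K V] [Group Γ] {ρ : Representation K Γ V} {W : Submodule K V}
    (h : (Set.range fun g => W.map (ρ g)).Finite) :
    ∃ H : Subgroup Γ, H.FiniteIndex ∧ ∀ g ∈ H, W ≤ W.comap (ρ g) := by
  let _ : MulAction Γ (Submodule K V) :=
    { smul := fun g U => U.map (ρ g)
      one_smul := fun U => by
        change U.map (ρ 1) = U
        rw [map_one]
        exact U.map_id
      mul_smul := fun g g' U => by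
        change U.map (ρ (g * g')) = (U.map (ρ g')).map (ρ g)
        rw [map_mul]
        exact U.map_comp _ _ }
  have : Finite (MulAction.orbit Γ W) := h
  have : Nonempty (MulAction.orbit Γ W) := ⟨⟨W, MulAction.mem_orbit_self W⟩⟩
  refine ⟨MulAction.stabilizer Γ W, ⟨?_⟩, fun g hg => Submodule.map_le_iff_le_comap.1 hg.le⟩
  rw [MulAction.index_stabilizer, ← Nat.card_coe_set_eq]
  exact Nat.card_pos.ne'

theorem IsStronglyIrreducible.isVirtuallyTriangular {K V Γ : Type*} [Field K] [IsAlgClosed K]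
    [AddCommGroup V] [Module K V] [FiniteDimensional K V] [Nontrivial V] [Group Γ]
    [Group.IsSolvable Γ] {ρ : Representation K Γ V} (h : IsStronglyIrreducible ρ) :
    IsVirtuallyTriangular ρ := by
  refine .of_commutator_le_ker ⊤ (Subgroup.commutator_le.2 fun x _ y _ => ?_)
  have hx : x ∈ scalarSubgroup ρ := h.scalarSubgroup_eq_top ▸ Subgroup.mem_top x
  obtain ⟨c, hc⟩ := mem_scalarSubgroup_iff.1 hx
  have hxy : ρ x * ρ y = ρ y * ρ x := by rw [hc, smul_one_mul, mul_smul_comm, mul_one]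
  calc ρ ⁅x, y⁆ = ρ x * ρ y * ρ (y * x)⁻¹ := by
        simp only [← map_mul, commutatorElement_def]; group
    _ = 1 := by rw [hxy, ← map_mul, ← map_mul, mul_inv_cancel, map_one]

theorem isVirtuallyTriangular_of_isAlgClosed {K V Γ : Type*} [Field K] [IsAlgClosed K]
    [AddCommGroup V] [Module K V] [FiniteDimensional K V] [Group Γ] [Group.IsSolvable Γ]
    (ρ : Representation K Γ V) : IsVirtuallyTriangular ρ := by
  induction hd : finrank K V using Nat.strong_induction_on generalizing V Γ with
  | _ d ih =>
  subst hd
  cases subsingleton_or_nontrivial V with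
  | inl _ => exact .of_finite
  | inr _ =>
  by_cases hirr : IsStronglyIrreducible ρ
  · exact hirr.isVirtuallyTriangular
  obtain ⟨W, hW, hW0, hW1⟩ : ∃ W : Submodule K V, (Set.range fun g => W.map (ρ g)).Finite ∧
      W ≠ ⊥ ∧ W ≠ ⊤ := by simpa [IsStronglyIrreducible] using hirr
  obtain ⟨H, _, hHW⟩ := exists_finiteIndex_forall_le_comap hW
  let ρH : Representation K H V := MonoidHom.comp ρ H.subtype
  have hle (g : H) : W ≤ W.comap (ρH g) := hHW g g.2
  have hquot : finrank K (V ⧸ W) < finrank K V := by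
    have := Submodule.finrank_quotient_add_finrank W
    have := Submodule.one_le_finrank_iff.2 hW0
    omega
  refine .of_finiteIndex H (.of_exact
    (ih _ (Submodule.finrank_lt hW1) (ρH.subrepresentation W hle) rfl)
    (ih _ hquot (ρH.quotient W hle) rfl) W.subtype.toAddMonoidHom W.mkQ.toAddMonoidHom
    (fun _ _ => rfl) (fun _ _ => rfl) fun a ha => ?_)
  exact ⟨⟨a, (Submodule.Quotient.mk_eq_zero W).1 ha⟩, rfl⟩

open scoped nonZeroDivisors in
theorem IsVirtuallyTriangular.of_isTorsionFree {R M Γ : Type*} [CommRing R] [IsDomain R]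
    [AddCommGroup M] [Module R M] [IsTorsionFree R M] [Group Γ] [Group.IsSolvable Γ]
    (ρ : Representation R Γ M) (hM : Module.rank R M < Cardinal.aleph0) :
    IsVirtuallyTriangular ρ := by
  let F := FractionRing R
  let K := AlgebraicClosure F
  let ρF : Representation F Γ (F ⊗[R] M) := (End.baseChangeHom R F M : _ →* _).comp ρ
  let ρK : Representation K Γ (K ⊗[F] (F ⊗[R] M)) :=
    (End.baseChangeHom F K (F ⊗[R] M) : _ →* _).comp ρF
  have : FiniteDimensional F (F ⊗[R] M) :=
    rank_lt_aleph0_iff.1 <| Cardinal.lift_lt_aleph0.1 <|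
      (TensorProduct.isBaseChange R M F).lift_rank_eq.trans_lt (Cardinal.lift_lt_aleph0.2 hM)
  have hF : IsVirtuallyTriangular ρF := (isVirtuallyTriangular_of_isAlgClosed ρK).of_injective
    (TensorProduct.mk F K (F ⊗[R] M) 1).toAddMonoidHom
    (FaithfullyFlat.tensorProduct_mk_injective (A := F) (B := K) (F ⊗[R] M)) fun _ _ => rfl
  refine hF.of_injective (TensorProduct.mk R F M 1).toAddMonoidHom ?_ fun _ _ => rfl
  refine (injective_iff_map_eq_zero _).2 fun a ha => ?_
  obtain ⟨c, hc⟩ := (IsLocalizedModule.eq_zero_iff R⁰ (TensorProduct.mk R F M 1)).1 ha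
  exact (smul_eq_zero.1 hc).resolve_left (nonZeroDivisors.coe_ne_zero c)

end LieKolchinMalcev

/-! ### Endomorphisms of locally cyclic groups -/

section LocallyCyclic

variable {p : ℕ} {A E : Type*} [AddCommGroup A] [AddCommGroup E]

theorem zsmul_mem_zmultiples_of_gcd_dvd {c : A} {m n : ℤ} {k : ℕ} (hc : k • c = 0)
    (h : (Int.gcd m k : ℤ) ∣ n) : n • c ∈ AddSubgroup.zmultiples (m • c) := by
  obtain ⟨t, rfl⟩ := h
  refine ⟨t * m.gcdA k, ?_⟩
  calc (t * m.gcdA k) • m • c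
      = (t * m.gcdA k) • m • c + (t * m.gcdB k) • k • c := by rw [hc, smul_zero, add_zero]
    _ = ((m.gcd k : ℤ) * t) • c := by rw [Int.gcd_eq_gcd_ab]; module

namespace IsLocallyCyclicPrimary

theorem mem_zmultiples_or_mem_zmultiples (hp : p.Prime) (hE : IsLocallyCyclicPrimary p E)
    (x y : E) : x ∈ AddSubgroup.zmultiples y ∨ y ∈ AddSubgroup.zmultiples x := by
  obtain ⟨c, ⟨m, rfl⟩, ⟨n, rfl⟩⟩ := hE.exists_mem_zmultiples x y
  obtain ⟨k, hk⟩ := hE.isPrimaryGroup c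
  obtain ⟨i, -, hi⟩ := (Nat.dvd_prime_pow hp).1 (Nat.gcd_dvd_right m.natAbs (p ^ k))
  obtain ⟨j, -, hj⟩ := (Nat.dvd_prime_pow hp).1 (Nat.gcd_dvd_right n.natAbs (p ^ k))
  have gcd_dvd_of_le {a b : ℤ} {i j : ℕ} (hi : a.natAbs.gcd (p ^ k) = p ^ i)
      (hj : b.natAbs.gcd (p ^ k) = p ^ j) (hij : i ≤ j) : (Int.gcd a (p ^ k : ℕ) : ℤ) ∣ b := by
    refine .trans (Int.natCast_dvd_natCast.2 ?_) (Int.gcd_dvd_left b (p ^ k : ℕ))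
    rw [Int.gcd_eq_natAbs, Int.gcd_eq_natAbs, Int.natAbs_natCast, hi, hj]
    exact pow_dvd_pow p hij
  rcases le_total i j with hij | hij
  · exact .inr (zsmul_mem_zmultiples_of_gcd_dvd hk (gcd_dvd_of_le hi hj hij))
  · exact .inl (zsmul_mem_zmultiples_of_gcd_dvd hk (gcd_dvd_of_le hj hi hij))

theorem apply_mem_zmultiples (hp : p.Prime) (hE : IsLocallyCyclicPrimary p E) (f : E →+ E)
    (x : E) : f x ∈ AddSubgroup.zmultiples x := by
  obtain ⟨c, ⟨m, rfl⟩, ⟨n, hn⟩⟩ := hE.exists_mem_zmultiples x (f x)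
  obtain ⟨k, hk⟩ := hE.isPrimaryGroup c
  set N := addOrderOf c
  have hN : (N : ℤ) ≠ 0 := Int.natCast_ne_zero.2
    (addOrderOf_pos_iff.2 (isOfFinAddOrder_iff_nsmul_eq_zero.2 ⟨_, pow_pos hp.pos k, hk⟩)).ne'
  obtain ⟨N', hN'⟩ : (Int.gcd m N : ℤ) ∣ N := Int.gcd_dvd_right ..
  obtain ⟨m', hm'⟩ : (Int.gcd m N : ℤ) ∣ m := Int.gcd_dvd_left ..
  have hNm : (N' * m) • c = 0 := by
    rw [hm', ← mul_assoc, mul_comm N', ← hN', mul_comm, mul_smul, natCast_zsmul,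
      addOrderOf_nsmul_eq_zero, smul_zero]
  have hNn : (N' * n) • c = 0 := by
    rw [mul_smul]
    exact (congrArg (N' • ·) hn).trans (by dsimp only; rw [← map_zsmul, ← mul_smul, hNm, map_zero])
  rw [← hn]
  refine zsmul_mem_zmultiples_of_gcd_dvd (addOrderOf_nsmul_eq_zero c) ?_
  rw [← addOrderOf_dvd_iff_zsmul_eq_zero] at hNn
  have hN'0 : N' ≠ 0 := right_ne_zero_of_mul (hN' ▸ hN)
  refine Int.dvd_of_mul_dvd_mul_left hN'0 ?_
  rwa [mul_comm N' (Int.gcd m N : ℤ), ← hN']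

theorem end_mul_comm (hp : p.Prime) (hE : IsLocallyCyclicPrimary p E) (f g : Module.End ℤ E) :
    f * g = g * f := by
  ext x
  obtain ⟨m, hm⟩ := hE.apply_mem_zmultiples hp f.toAddMonoidHom x
  obtain ⟨n, hn⟩ := hE.apply_mem_zmultiples hp g.toAddMonoidHom x
  replace hm : m • x = f x := hm
  replace hn : n • x = g x := hn
  rw [End.mul_apply, End.mul_apply, ← hm, ← hn, map_zsmul, map_zsmul, ← hm, ← hn, smul_comm]

theorem surjective_of_ne_zero (hp : p.Prime) (hE : IsLocallyCyclicPrimary p E)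
    (hA : IsDivisible A) {f : A →ₗ[ℤ] E} (hf : f ≠ 0) : Surjective f := fun y => by
  obtain ⟨a, ha⟩ := DFunLike.ne_iff.1 hf
  obtain ⟨k, hk⟩ := hE.isPrimaryGroup y
  obtain ⟨b, rfl⟩ := hA (p ^ k) (pow_ne_zero k hp.ne_zero) a
  rcases hE.mem_zmultiples_or_mem_zmultiples hp (f b) y with ⟨n, hn⟩ | ⟨n, hn⟩
  · refine absurd ?_ ha
    dsimp only at hn ⊢
    rw [map_nsmul, ← hn, smul_comm, hk, smul_zero, LinearMap.zero_apply]
  · exact ⟨n • b, (map_zsmul f n b).trans hn⟩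

end IsLocallyCyclicPrimary

theorem IsDivisible.baer (hE : IsDivisible E) : Module.Baer ℤ E := by
  have (n : ℤ) (hn : n ≠ 0) : Surjective (n • · : E → E) := fun e => by
    obtain ⟨e', rfl⟩ := hE n.natAbs (Int.natAbs_ne_zero.2 hn) e
    exact ⟨n.sign • e', by dsimp only; rw [← mul_smul, Int.mul_sign_self, natCast_zsmul]⟩
  let _ : DivisibleBy E ℤ := divisibleByOfSMulRightSurj E ℤ fun {n} hn => this n hn
  exact Module.Baer.of_divisible E

theorem exists_comp_eq_of_ker_le {B : Type*} [AddCommGroup B] (hE : Module.Baer ℤ E)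
    (f : B →ₗ[ℤ] A) (g : B →ₗ[ℤ] E) (h : LinearMap.ker f ≤ LinearMap.ker g) :
    ∃ r : A →ₗ[ℤ] E, r ∘ₗ f = g := by
  have hinj : Injective ((LinearMap.ker f).liftQ f le_rfl) :=
    LinearMap.ker_eq_bot.1 (Submodule.ker_liftQ_eq_bot _ _ _ le_rfl)
  obtain ⟨r, hr⟩ := hE.extension_property _ hinj ((LinearMap.ker f).liftQ g h)
  exact ⟨r, LinearMap.ext fun b => LinearMap.congr_fun hr (Submodule.Quotient.mk b)⟩

end LocallyCyclic

section PruferEnd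

variable {p : ℕ} [hp : Fact p.Prime]

instance : Nontrivial (pruferSubgroup p) := nontrivial_pruferSubgroup hp.out

instance : CommRing (Module.End ℤ (pruferSubgroup p)) where
  mul_comm := (isLocallyCyclicPrimary_pruferSubgroup hp.out).end_mul_comm hp.out

instance : IsDomain (Module.End ℤ (pruferSubgroup p)) := by
  have : NoZeroDivisors (Module.End ℤ (pruferSubgroup p)) := by
    refine ⟨fun {f g} h => or_iff_not_imp_right.2 fun hg => ?_⟩
    have hsurj := (isLocallyCyclicPrimary_pruferSubgroup hp.out).surjective_of_ne_zero hp.out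
      (isDivisible_pruferSubgroup hp.out) hg
    exact LinearMap.cancel_right hsurj |>.1 (h.trans (LinearMap.zero_comp g).symm)
  exact NoZeroDivisors.to_isDomain _

theorem isTorsionFree_linearMap_pruferSubgroup {A : Type*} [AddCommGroup A] (hA : IsDivisible A) :
    IsTorsionFree (Module.End ℤ (pruferSubgroup p)) (A →ₗ[ℤ] pruferSubgroup p) := by
  have : NoZeroSMulDivisors (Module.End ℤ (pruferSubgroup p)) (A →ₗ[ℤ] pruferSubgroup p) := by
    refine ⟨fun {r f} h => or_iff_not_imp_right.2 fun hf => ?_⟩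
    have hsurj := (isLocallyCyclicPrimary_pruferSubgroup hp.out).surjective_of_ne_zero hp.out hA hf
    exact LinearMap.cancel_right hsurj |>.1 (h.trans (LinearMap.zero_comp f).symm)
  infer_instance

theorem exists_linearMap_pruferSubgroup_ne_zero {A : Type*} [AddCommGroup A] {a : A} (ha : a ≠ 0)
    (hpa : p • a = 0) : ∃ f : A →ₗ[ℤ] pruferSubgroup p, f a ≠ 0 := by
  obtain ⟨e, he⟩ := exists_addOrderOf_eq_pruferSubgroup hp.out
  obtain ⟨f, hf⟩ := exists_comp_eq_of_ker_le (isDivisible_pruferSubgroup hp.out).baer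
    (LinearMap.toSpanSingleton ℤ A a) (LinearMap.toSpanSingleton ℤ _ e) fun n hn => by
      rw [LinearMap.mem_ker, LinearMap.toSpanSingleton_apply, ← addOrderOf_dvd_iff_zsmul_eq_zero]
        at hn ⊢
      rwa [he, ← addOrderOf_eq_prime hpa ha]
  refine ⟨f, fun h => hp.out.one_lt.ne' ?_⟩
  rw [← he, AddMonoid.addOrderOf_eq_one_iff, ← h]
  simpa using (LinearMap.congr_fun hf 1).symm

end PruferEnd

/-! ### Representations on abelian minimax groups -/

section HomRank

variable {R : Type*} [CommRing R] {E : Type v} [AddCommGroup E] [Module R E]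
  {B : Type u} [AddCommGroup B] {S : Set ℕ} {p : ℕ}

theorem rank_linearMap_lt_aleph0_of_isAddCyclic [IsAddCyclic B]
    (hrank : Module.rank R E < Cardinal.aleph0) :
    Module.rank R (B →ₗ[ℤ] E) < Cardinal.aleph0 := by
  obtain ⟨z, hz⟩ := IsAddCyclic.exists_zsmul_surjective (G := B)
  have hinj : Injective (LinearMap.applyₗ' R z : (B →ₗ[ℤ] E) →ₗ[R] E) := fun f g hfg => by
    ext b
    obtain ⟨n, rfl⟩ := hz b
    exact (map_zsmul f n z).trans ((congrArg (n • ·) hfg).trans (map_zsmul g n z).symm)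
  exact Cardinal.lift_lt_aleph0.1 <|
    (LinearMap.lift_rank_le_of_injective _ hinj).trans_lt (Cardinal.lift_lt_aleph0.2 hrank)

theorem IsLocallyCyclicPrimary.rank_linearMap_le_one [Nontrivial R] (hp : p.Prime)
    (hB : IsLocallyCyclicPrimary p B) (hE : IsDivisible E)
    (hR : ∀ f : E →ₗ[ℤ] E, ∃ r : R, ∀ e, f e = r • e) : Module.rank R (B →ₗ[ℤ] E) ≤ 1 := by
  have ker_le_or_ker_le (f g : B →ₗ[ℤ] E) :
      LinearMap.ker f ≤ LinearMap.ker g ∨ LinearMap.ker g ≤ LinearMap.ker f := by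
    refine or_iff_not_imp_left.2 fun hfg b hb => ?_
    obtain ⟨a, ha, ha'⟩ := SetLike.not_le_iff_exists.1 hfg
    rcases hB.mem_zmultiples_or_mem_zmultiples hp a b with ⟨n, rfl⟩ | ⟨n, rfl⟩
    · exact absurd (Submodule.smul_mem _ n hb) ha'
    · exact Submodule.smul_mem _ n ha
  have exists_smul_eq {f g : B →ₗ[ℤ] E} (h : LinearMap.ker f ≤ LinearMap.ker g) :
      ∃ r : R, g = r • f := by
    obtain ⟨e, rfl⟩ := exists_comp_eq_of_ker_le hE.baer f g h
    obtain ⟨r, hr⟩ := hR e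
    exact ⟨r, LinearMap.ext fun b => hr (f b)⟩
  rw [← Nat.cast_one]
  refine rank_le fun s hs => Finset.card_le_one.2 fun f hf g hg => by_contra fun hfg => ?_
  have not_ker_le {f g : B →ₗ[ℤ] E} (hf : f ∈ s) (hg : g ∈ s) (hfg : f ≠ g) :
      ¬LinearMap.ker f ≤ LinearMap.ker g := fun hle => by
    obtain ⟨r, hr⟩ := exists_smul_eq hle
    have hpair : LinearIndepOn R id {f, g} :=
      LinearIndepOn.mono (t := {f, g}) hs (Set.pair_subset hf hg)
    have := (LinearIndepOn.pair_iff _ hfg).1 hpair r (-1)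
      (by rw [id, id, neg_one_smul, ← hr, add_neg_cancel])
    exact one_ne_zero (neg_eq_zero.1 this.2)
  rcases ker_le_or_ker_le f g with h | h
  · exact not_ker_le hf hg hfg h
  · exact not_ker_le hg hf (Ne.symm hfg) h

theorem AbelianMinimax.rank_linearMap_lt_aleph0 [IsDomain R] (hB : AbelianMinimax S B)
    (hE : IsDivisible E) (hR : ∀ f : E →ₗ[ℤ] E, ∃ r : R, ∀ e, f e = r • e)
    (hrank : Module.rank R E < Cardinal.aleph0) :
    Module.rank R (B →ₗ[ℤ] E) < Cardinal.aleph0 := by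
  induction hB with
  | of_subsingleton B =>
    rw [rank_subsingleton']
    exact Cardinal.aleph0_pos
  | @of_factor B F _ _ f hF _ ih =>
    have hFE : Module.rank R (F →ₗ[ℤ] E) < Cardinal.aleph0 := by
      rcases hF with hcyc | ⟨p, -, hp, hF⟩
      · exact rank_linearMap_lt_aleph0_of_isAddCyclic hrank
      · exact (hF.rank_linearMap_le_one hp hE hR).trans_lt Cardinal.one_lt_aleph0
    let restrict : (B →ₗ[ℤ] E) →ₗ[R] (f.ker →ₗ[ℤ] E) :=
      LinearMap.lcomp R E f.ker.subtype.toIntLinearMap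
    let inflate : (F →ₗ[ℤ] E) →ₗ[R] (B →ₗ[ℤ] E) := LinearMap.lcomp R E f.toIntLinearMap
    have hle : LinearMap.ker restrict ≤ LinearMap.range inflate := fun g hg =>
      exists_comp_eq_of_ker_le hE.baer f.toIntLinearMap g fun b hb =>
        LinearMap.congr_fun (LinearMap.mem_ker.1 hg) (⟨b, hb⟩ : f.ker)
    rw [← LinearMap.rank_range_add_rank_ker restrict]
    refine Cardinal.add_lt_aleph0 ((Submodule.rank_le _).trans_lt ih) ?_
    refine (Submodule.rank_mono hle).trans_lt ?_
    exact Cardinal.lift_lt_aleph0.1 <|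
      (lift_rank_range_le inflate).trans_lt (Cardinal.lift_lt_aleph0.2 hFE)

end HomRank

section Dual

variable {Γ A : Type*} [Group Γ] [AddCommGroup A]

/-- The contragredient action `(g • f) a = f (g⁻¹ • a)` on the homomorphisms from `A` to a fixed
`R`-module `E`, as an `R`-linear representation. -/
def dualRepresentation (R E : Type*) [CommRing R] [AddCommGroup E] [Module R E]
    (ρ : Representation ℤ Γ A) : Representation R Γ (A →ₗ[ℤ] E) where
  toFun g := LinearMap.lcomp R E (ρ g⁻¹)
  map_one' := by
    ext f a
    simp
  map_mul' g h := by
    ext f a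
    simp

theorem dualRepresentation_prod_apply {R E : Type*} [CommRing R] [AddCommGroup E] [Module R E]
    (ρ : Representation ℤ Γ A) (l : List Γ) (f : A →ₗ[ℤ] E) (a : A) :
    (l.map fun g => dualRepresentation R E ρ g - 1).prod f a =
      f ((l.reverse.map fun g => ρ g⁻¹ - 1).prod a) := by
  induction l generalizing a with
  | nil => rfl
  | cons g l ih =>
    rw [List.map_cons, List.prod_cons, List.reverse_cons, List.map_append, List.prod_append,
      End.mul_apply, End.mul_apply, ← ih]
    exact (map_sub ((l.map fun g => dualRepresentation R E ρ g - 1).prod f) _ a).symm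

theorem IsVirtuallyTriangular.of_dual {ι : Type*} [Finite ι] {R E : ι → Type*}
    [∀ i, CommRing (R i)] [∀ i, AddCommGroup (E i)] [∀ i, Module (R i) (E i)]
    {ρ : Representation ℤ Γ A}
    (h : ∀ i, IsVirtuallyTriangular (dualRepresentation (R i) (E i) ρ))
    (hsep : ∀ a, (∀ i, ∀ f : A →ₗ[ℤ] E i, f a = 0) → a = 0) : IsVirtuallyTriangular ρ := by
  choose H hH n hn using h
  obtain ⟨m, hm⟩ := Finite.exists_le n
  refine ⟨⨅ i, H i, Subgroup.finiteIndex_iInf hH, m, fun l hl hlH => LinearMap.ext fun a => ?_⟩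
  refine hsep _ fun i f => ?_
  have hni := ((hn i).mono (Subgroup.commutator_mono (iInf_le H i) (iInf_le H i)) (hm i))
    (l.map (·⁻¹)).reverse (by simpa using hl) fun g hg => by
      obtain ⟨g, hgl, rfl⟩ := List.mem_map.1 (List.mem_reverse.1 hg)
      exact inv_mem (hlH g hgl)
  have := dualRepresentation_prod_apply (R := R i) ρ (l.map (·⁻¹)).reverse f a
  rw [hni, List.reverse_reverse, List.map_map] at this
  simpa only [comp_def, inv_inv, LinearMap.zero_apply] using this.symm

end Dual

section Torsion

variable {S : Set ℕ} {A : Type u} [AddCommGroup A]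

theorem finite_setOf_prime_torsion_of_isAddCyclic [IsAddCyclic A] :
    {p : ℕ | p.Prime ∧ ∃ a : A, a ≠ 0 ∧ p • a = 0}.Finite := by
  obtain ⟨z, hz⟩ := IsAddCyclic.exists_zsmul_surjective (G := A)
  refine (addOrderOf z).divisors.finite_toSet.subset ?_
  rintro p ⟨hp, a, ha, hpa⟩
  obtain ⟨m, rfl⟩ := hz a
  dsimp only at ha hpa
  rw [← natCast_zsmul, ← mul_smul, ← addOrderOf_dvd_iff_zsmul_eq_zero] at hpa
  rw [Ne, ← addOrderOf_dvd_iff_zsmul_eq_zero] at ha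
  rw [Finset.mem_coe, Nat.mem_divisors]
  refine ⟨by_contra fun hpN => ha ?_, fun h0 => ha ?_⟩
  · exact (Nat.isCoprime_iff_coprime.2 ((hp.coprime_iff_not_dvd.2 hpN).symm)).dvd_of_dvd_mul_left
      hpa
  · rw [h0, Nat.cast_zero, zero_dvd_iff, mul_eq_zero] at hpa
    rw [hpa.resolve_left (Nat.cast_ne_zero.2 hp.ne_zero)]
    exact dvd_zero _

theorem IsMinimaxFactor.finite_setOf_prime_torsion (h : IsMinimaxFactor S A) :
    {p : ℕ | p.Prime ∧ ∃ a : A, a ≠ 0 ∧ p • a = 0}.Finite := by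
  rcases h with hcyc | ⟨q, -, hq, hA⟩
  · exact finite_setOf_prime_torsion_of_isAddCyclic
  · refine (Set.finite_singleton q).subset ?_
    rintro p ⟨hp, a, ha, hpa⟩
    obtain ⟨k, hk⟩ := hA.isPrimaryGroup a
    by_contra hpq
    exact ha (eq_zero_of_coprime_nsmul_eq_zero
      (((Nat.coprime_primes hp hq).2 hpq).pow_right k) hpa hk)

theorem AbelianMinimax.finite_setOf_prime_torsion (h : AbelianMinimax S A) :
    {p : ℕ | p.Prime ∧ ∃ a : A, a ≠ 0 ∧ p • a = 0}.Finite := by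
  induction h with
  | of_subsingleton A =>
    exact Set.finite_empty.subset fun p ⟨_, a, ha, _⟩ => ha (Subsingleton.elim a 0)
  | of_factor f hF _ ih =>
    refine (ih.union hF.finite_setOf_prime_torsion).subset ?_
    rintro p ⟨hp, a, ha, hpa⟩
    by_cases hfa : f a = 0
    · exact .inl ⟨hp, ⟨a, hfa⟩, fun h => ha (congrArg Subtype.val h), Subtype.ext hpa⟩
    · exact .inr ⟨hp, f a, hfa, by rw [← map_nsmul, hpa, map_zero]⟩

theorem IsMinimaxFactor.exists_nsmul_eq_zero_or_isDivisible (h : IsMinimaxFactor S A)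
    (ht : IsAddTorsion A) : (∃ k ≠ 0, ∀ a : A, k • a = 0) ∨ IsDivisible A := by
  have exists_nsmul_eq_zero (_ : IsAddCyclic A) : ∃ k ≠ 0, ∀ a : A, k • a = 0 := by
    obtain ⟨z, hz⟩ := IsAddCyclic.exists_zsmul_surjective (G := A)
    refine ⟨addOrderOf z, (ht z).addOrderOf_pos.ne', fun a => ?_⟩
    obtain ⟨n, rfl⟩ := hz a
    dsimp only
    rw [smul_comm, addOrderOf_nsmul_eq_zero, smul_zero]
  rcases h with hcyc | ⟨q, -, hq, hA⟩
  · exact .inl (exists_nsmul_eq_zero hcyc)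
  · exact (hA.isAddCyclic_or_isDivisible hq).imp exists_nsmul_eq_zero id

theorem AbelianMinimax.exists_isDivisible_nsmul_range (h : AbelianMinimax S A)
    (ht : IsAddTorsion A) :
    ∃ m ≠ 0, IsDivisible (nsmulAddMonoidHom m : A →+ A).range := by
  suffices ∃ m : ℕ, m ≠ 0 ∧ ∀ n : ℕ, n ≠ 0 → ∀ a : A, ∃ b : A, n • m • b = m • a by
    obtain ⟨m, hm, hdiv⟩ := this
    refine ⟨m, hm, fun n hn => ?_⟩
    rintro ⟨_, a, rfl⟩
    obtain ⟨b, hb⟩ := hdiv n hn a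
    exact ⟨⟨_, b, rfl⟩, Subtype.ext hb⟩
  induction h with
  | of_subsingleton A => exact ⟨1, one_ne_zero, fun n _ a => ⟨a, Subsingleton.elim _ _⟩⟩
  | @of_factor B F _ _ f hF _ ih =>
    obtain ⟨m, hm, hdiv⟩ := ih (ht.addSubgroup f.ker)
    have hFr := hF.of_injective f.range.subtype Subtype.val_injective
    rcases hFr.exists_nsmul_eq_zero_or_isDivisible (ht.of_surjective f.rangeRestrict_surjective)
      with ⟨k, hk, hkf⟩ | hrange
    · have hker (a) : f (k • a) = 0 := by
        rw [map_nsmul]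
        exact congrArg Subtype.val (hkf ⟨f a, a, rfl⟩)
      refine ⟨m * k, mul_ne_zero hm hk, fun n hn a => ?_⟩
      obtain ⟨b, hb⟩ := hdiv (n * k) (mul_ne_zero hn hk) ⟨k • a, hker a⟩
      refine ⟨b, ?_⟩
      have hb' : (n * k) • m • (b : B) = m • k • a := congrArg Subtype.val hb
      rw [mul_smul m k a, ← hb', mul_comm m, mul_smul, mul_smul]
    · refine ⟨m, hm, fun n hn a => ?_⟩
      obtain ⟨⟨_, b, rfl⟩, hb⟩ := hrange n hn ⟨f a, a, rfl⟩
      have hker : f (a - n • b) = 0 := by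
        rw [map_sub, map_nsmul, sub_eq_zero]
        exact (congrArg Subtype.val hb).symm
      obtain ⟨c, hc⟩ := hdiv n hn ⟨_, hker⟩
      refine ⟨b + c, ?_⟩
      have hc' : n • m • (c : B) = m • (a - n • b) := congrArg Subtype.val hc
      rw [smul_add, smul_add, hc', smul_sub, smul_comm n m b, add_sub_cancel]

end Torsion

theorem rank_end_pruferSubgroup {p : ℕ} [hp : Fact p.Prime] :
    Module.rank (Module.End ℤ (pruferSubgroup p)) (pruferSubgroup p) = 0 := by
  refine rank_eq_zero_iff.2 fun e => ?_
  obtain ⟨k, hk⟩ := isPrimaryGroup_pruferSubgroup p e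
  refine ⟨(p ^ k : ℕ), fun h0 => ?_, ?_⟩
  · have hsub := (isDivisible_pruferSubgroup hp.out).subsingleton_of_nsmul_eq_zero
      (pow_ne_zero k hp.out.ne_zero) fun a =>
        (End.natCast_apply (p ^ k) a).symm.trans (LinearMap.congr_fun h0 a)
    exact not_subsingleton (pruferSubgroup p) hsub
  · rw [Module.End.smul_def, End.natCast_apply, hk]

theorem exists_prime_nsmul_eq_zero {A : Type*} [AddGroup A] {a : A} (ha : IsOfFinAddOrder a)
    (ha0 : a ≠ 0) : ∃ p c : ℕ, p.Prime ∧ c • a ≠ 0 ∧ p • c • a = 0 := by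
  obtain ⟨p, hp, c, hc⟩ := Nat.exists_prime_and_dvd (mt AddMonoid.addOrderOf_eq_one_iff.1 ha0)
  have hpos := ha.addOrderOf_pos
  refine ⟨p, c, hp, fun h => ?_, by rw [← mul_smul, ← hc, addOrderOf_nsmul_eq_zero]⟩
  have hc0 : 0 < c := Nat.pos_of_ne_zero fun h0 => hpos.ne' (by rw [hc, h0, mul_zero])
  have hle := Nat.le_of_dvd hc0 (addOrderOf_dvd_of_nsmul_eq_zero h)
  rw [hc] at hle
  exact (lt_mul_of_one_lt_left hc0 hp.one_lt).not_ge hle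

theorem isVirtuallyTriangular_of_subrepresentation {Γ A : Type*} [Group Γ] [AddCommGroup A]
    {ρ : Representation ℤ Γ A} (W : Submodule ℤ A) (hW : ∀ g, W ≤ W.comap (ρ g))
    (hsub : IsVirtuallyTriangular (ρ.subrepresentation W hW))
    (hquot : IsVirtuallyTriangular (ρ.quotient W hW)) : IsVirtuallyTriangular ρ :=
  .of_exact hsub hquot W.subtype W.mkQ (fun _ _ => rfl) (fun _ _ => rfl) fun a ha =>
    ⟨⟨a, (Submodule.Quotient.mk_eq_zero W).1 ha⟩, rfl⟩

section VirtuallyTriangular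

variable {S : Set ℕ} {Γ : Type*} [Group Γ] [Group.IsSolvable Γ] {A : Type u} [AddCommGroup A]

theorem AbelianMinimax.isVirtuallyTriangular_of_isDivisible (hA : AbelianMinimax S A)
    (ht : IsAddTorsion A) (hdiv : IsDivisible A) (ρ : Representation ℤ Γ A) :
    IsVirtuallyTriangular ρ := by
  let ι := {p : ℕ | p.Prime ∧ ∃ a : A, a ≠ 0 ∧ p • a = 0}
  have : Finite ι := hA.finite_setOf_prime_torsion
  have (p : ι) : Fact (p : ℕ).Prime := ⟨p.2.1⟩
  refine .of_dual (ι := ι) (R := fun p => Module.End ℤ (pruferSubgroup p))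
    (E := fun p => pruferSubgroup p) (fun p => ?_) fun a ha => by_contra fun ha0 => ?_
  · have := isTorsionFree_linearMap_pruferSubgroup (p := p) hdiv
    refine IsVirtuallyTriangular.of_isTorsionFree _ ?_
    refine hA.rank_linearMap_lt_aleph0 (isDivisible_pruferSubgroup p.2.1)
      (fun f => ⟨f, fun _ => rfl⟩) ?_
    rw [rank_end_pruferSubgroup]
    exact Cardinal.aleph0_pos
  · obtain ⟨p, c, hp, hca, hpca⟩ := exists_prime_nsmul_eq_zero (ht a) ha0
    have : Fact p.Prime := ⟨hp⟩
    obtain ⟨f, hf⟩ := exists_linearMap_pruferSubgroup_ne_zero hca hpca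
    exact hf (by rw [map_nsmul, ha ⟨p, hp, c • a, hca, hpca⟩ f, smul_zero])

theorem AbelianMinimax.isVirtuallyTriangular_of_isAddTorsion (hA : AbelianMinimax S A)
    (ht : IsAddTorsion A) (ρ : Representation ℤ Γ A) : IsVirtuallyTriangular ρ := by
  obtain ⟨m, hm, hdiv⟩ := hA.exists_isDivisible_nsmul_range ht
  let W : Submodule ℤ A := (nsmulAddMonoidHom m : A →+ A).range.toIntSubmodule
  have hW (g : Γ) : W ≤ W.comap (ρ g) := by
    rintro _ ⟨a, rfl⟩
    exact ⟨ρ g a, (map_nsmul (ρ g) m a).symm⟩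
  have : Finite (A ⧸ W) := by
    refine (hA.of_surjective W.mkQ.toAddMonoidHom W.mkQ_surjective).finite_of_nsmul_eq_zero hm ?_
    intro a
    obtain ⟨a, rfl⟩ := W.mkQ_surjective a
    exact (Submodule.Quotient.mk_eq_zero W).2 ⟨a, rfl⟩
  exact isVirtuallyTriangular_of_subrepresentation W hW
    ((hA.addSubgroup W.toAddSubgroup).isVirtuallyTriangular_of_isDivisible
      (ht.addSubgroup W.toAddSubgroup) hdiv _) .of_finite

theorem isDivisible_rat : IsDivisible ℚ := fun n hn q =>
  ⟨q / n, by
    dsimp only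
    rw [nsmul_eq_mul, mul_div_cancel₀ _ (Nat.cast_ne_zero.2 hn)]⟩

theorem AbelianMinimax.isVirtuallyTriangular_of_isTorsionFree [IsTorsionFree ℤ A]
    (hA : AbelianMinimax S A) (ρ : Representation ℤ Γ A) : IsVirtuallyTriangular ρ := by
  refine .of_dual (ι := Unit) (R := fun _ => ℚ) (E := fun _ => ℚ) (fun _ => ?_)
    fun a ha => by_contra fun ha0 => ?_
  · refine .of_isTorsionFree _ (hA.rank_linearMap_lt_aleph0 isDivisible_rat
      (fun f => ⟨f 1, fun q => ?_⟩) ?_)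
    · simpa [mul_comm] using map_rat_smul f q 1
    · rw [rank_self]
      exact Cardinal.one_lt_aleph0
  · obtain ⟨f, hf⟩ := exists_comp_eq_of_ker_le isDivisible_rat.baer
      (LinearMap.toSpanSingleton ℤ A a) (LinearMap.toSpanSingleton ℤ ℚ 1) fun n hn => by
        have hn0 : n = 0 := (smul_eq_zero.1 hn).resolve_right ha0
        rw [hn0]
        exact zero_mem _
    refine one_ne_zero (α := ℚ) ?_
    rw [← ha () f]
    simpa using (LinearMap.congr_fun hf 1).symm

theorem AbelianMinimax.isVirtuallyTriangular (hA : AbelianMinimax S A)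
    (ρ : Representation ℤ Γ A) : IsVirtuallyTriangular ρ := by
  let W : Submodule ℤ A := Submodule.torsion ℤ A
  have hW (g : Γ) : W ≤ W.comap (ρ g) := fun a ⟨n, hn⟩ =>
    ⟨n, (map_zsmul (ρ g) (n : ℤ) a).symm.trans (by rw [← Submonoid.smul_def, hn, map_zero])⟩
  have ht : IsAddTorsion W.toAddSubgroup := fun ⟨a, n, hn⟩ =>
    isOfFinAddOrder_iff_zsmul_eq_zero.2 ⟨n, nonZeroDivisors.coe_ne_zero n, Subtype.ext hn⟩
  have hquot : AbelianMinimax S (A ⧸ W) := hA.of_surjective W.mkQ.toAddMonoidHom W.mkQ_surjective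
  exact isVirtuallyTriangular_of_subrepresentation W hW
    ((hA.addSubgroup W.toAddSubgroup).isVirtuallyTriangular_of_isAddTorsion ht _)
    (hquot.isVirtuallyTriangular_of_isTorsionFree _)

end VirtuallyTriangular

/-! ### Sections as modules -/

section SectionPreimage

variable {G A : Type*} [Group G] [AddCommGroup A] {X : Subgroup G}

/-- The subgroup of `G` corresponding to a subgroup `W` of the quotient `q : X → A` of `X`. -/
def sectionPreimage (q : X →* Multiplicative A) (W : AddSubgroup A) : Subgroup G :=
  (W.toSubgroup.comap q).map X.subtype

variable {q : X →* Multiplicative A} {W : AddSubgroup A}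

theorem coe_mem_sectionPreimage {x : X} : (x : G) ∈ sectionPreimage q W ↔ (q x).toAdd ∈ W :=
  Subgroup.mem_map_iff_mem X.subtype_injective

theorem sectionPreimage_le : sectionPreimage q W ≤ X :=
  Subgroup.map_subtype_le _

theorem eq_top_of_le_sectionPreimage (hq : Surjective q) (h : X ≤ sectionPreimage q W) :
    W = ⊤ :=
  (AddSubgroup.eq_top_iff' W).2 fun a => by
    obtain ⟨x, hx⟩ := hq (.ofAdd a)
    have hxW := coe_mem_sectionPreimage.1 (h x.2)
    rwa [hx] at hxW

end SectionPreimage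

section IsSection

variable {G : Type u} {A : Type*} [Group G] [AddCommGroup A] {N X Y : Subgroup G} [N.Normal]
  [X.Normal]

/-- The section `X / Y` of `G`, with `G` acting by conjugation, is realized by the representation
`ρ` of `G ⧸ N` on the additive group `A`, through the projection `q : X → A`. -/
structure IsSection (X Y : Subgroup G) [X.Normal] (q : X →* Multiplicative A)
    (ρ : Representation ℤ (G ⧸ N) A) : Prop where
  surjective : Surjective q
  eq_one_iff (x : X) : q x = 1 ↔ (x : G) ∈ Y
  apply_toAdd (g : G) (x : X) : ρ g (q x).toAdd = (q (MulAut.conjNormal g x)).toAdd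

theorem exists_isSection (N X Y : Subgroup G) [N.Normal] [X.Normal] [Y.Normal] (hX : ⁅X, X⁆ ≤ Y)
    (hNX : ⁅N, X⁆ ≤ Y) :
    ∃ (A : Type u) (_ : AddCommGroup A) (q : X →* Multiplicative A)
      (ρ : Representation ℤ (G ⧸ N) A), IsSection X Y q ρ := by
  have hcomm : commutator X ≤ Y.subgroupOf X :=
    Subgroup.map_le_iff_le_comap.1 ((Subgroup.map_subtype_commutator X).trans_le hX)
  have := Subgroup.Normal.quotient_commutative_iff_commutator_le.2 hcomm
  let : CommGroup (X ⧸ Y.subgroupOf X) := { mul_comm := mul_comm' }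
  let act (g : G) : Module.End ℤ (Additive (X ⧸ Y.subgroupOf X)) :=
    (MonoidHom.toAdditive (QuotientGroup.map (Y.subgroupOf X) (Y.subgroupOf X)
      (MulAut.conjNormal g : X ≃* X).toMonoidHom
      fun x hx => ‹Y.Normal›.conj_mem x hx g)).toIntLinearMap
  have act_one : act 1 = 1 := LinearMap.ext fun a => by
    obtain ⟨x, rfl⟩ := QuotientGroup.mk_surjective a
    exact congrArg (QuotientGroup.mk' (Y.subgroupOf X)) (by simp)
  have act_mul (g h : G) : act (g * h) = act g * act h := LinearMap.ext fun a => by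
    obtain ⟨x, rfl⟩ := QuotientGroup.mk_surjective a
    exact congrArg (QuotientGroup.mk' (Y.subgroupOf X)) (by simp)
  refine ⟨Additive (X ⧸ Y.subgroupOf X), inferInstance, QuotientGroup.mk' (Y.subgroupOf X),
    QuotientGroup.lift N ⟨⟨act, act_one⟩, act_mul⟩ fun n hn => LinearMap.ext fun a => ?_,
    QuotientGroup.mk'_surjective _, QuotientGroup.eq_one_iff, fun g x => rfl⟩
  obtain ⟨x, rfl⟩ := QuotientGroup.mk_surjective a
  refine QuotientGroup.eq_iff_div_mem.2 (hNX ?_)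
  simpa [div_eq_mul_inv, commutatorElement_def] using Subgroup.commutator_mem_commutator hn x.2

namespace IsSection

variable {q : X →* Multiplicative A} {ρ : Representation ℤ (G ⧸ N) A}

theorem exists_toAdd_eq (h : IsSection X Y q ρ) (a : A) : ∃ x, (q x).toAdd = a :=
  h.surjective (.ofAdd a)

theorem eq_iff (h : IsSection X Y q ρ) {x y : X} : q x = q y ↔ (x : G)⁻¹ * y ∈ Y := by
  rw [← inv_mul_eq_one, ← map_inv, ← map_mul, h.eq_one_iff]
  rfl

theorem le_sectionPreimage (h : IsSection X Y q ρ) (hYX : Y ≤ X) (W : AddSubgroup A) :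
    Y ≤ sectionPreimage q W := fun y hy =>
  coe_mem_sectionPreimage (x := ⟨y, hYX hy⟩).2 <| by
    rw [(h.eq_one_iff ⟨y, hYX hy⟩).2 hy]
    exact W.zero_mem

theorem normal_sectionPreimage (h : IsSection X Y q ρ) {W : AddSubgroup A}
    (hW : ∀ g, ∀ w ∈ W, ρ g w ∈ W) : (sectionPreimage q W).Normal where
  conj_mem := by
    rintro _ ⟨x, hx, rfl⟩ g
    refine coe_mem_sectionPreimage (x := MulAut.conjNormal g x).2 ?_
    rw [← h.apply_toAdd]
    exact hW g _ hx

end IsSection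

end IsSection

section IteratedCommutator

variable {G : Type u} [Group G]

/-- The right-normed commutator `⁅g₁, ⁅g₂, … ⁅gₙ, x⁆ … ⁆⁆`, where `l = [g₁, …, gₙ]`. -/
def iteratedCommutator (l : List G) (x : G) : G :=
  l.foldr (fun g y => ⁅g, y⁆) x

theorem iteratedCommutator_append (l m : List G) (x : G) :
    iteratedCommutator (l ++ m) x = iteratedCommutator l (iteratedCommutator m x) :=
  List.foldr_append

theorem map_iteratedCommutator {G' : Type*} [Group G'] (f : G →* G') (l : List G) (x : G) :
    f (iteratedCommutator l x) = iteratedCommutator (l.map f) (f x) := by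
  induction l with
  | nil => rfl
  | cons g l ih => exact (map_commutatorElement f g _).trans (congrArg (⁅f g, ·⁆) ih)

theorem iteratedCommutator_mem {X : Subgroup G} [hX : X.Normal] (l : List G) {x : G} (hx : x ∈ X) :
    iteratedCommutator l x ∈ X := by
  induction l with
  | nil => exact hx
  | cons g l ih => exact X.mul_mem (hX.conj_mem _ ih g) (X.inv_mem ih)

theorem isNilpotent_of_iteratedCommutator_eq_one (n : ℕ)
    (h : ∀ l : List G, l.length = n → ∀ x, iteratedCommutator l x = 1) : Group.IsNilpotent G := by
  suffices mem_upperCentralSeries : ∀ (n : ℕ) (x : G),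
      (∀ l : List G, l.length = n → iteratedCommutator l x = 1) →
        x ∈ Subgroup.upperCentralSeries G n from
    ⟨n, (Subgroup.eq_top_iff' _).2 fun x => mem_upperCentralSeries n x fun l hl => h l hl x⟩
  intro n
  induction n with
  | zero => exact fun x hx => hx [] rfl
  | succ n ih =>
    refine fun x hx => Subgroup.mem_upperCentralSeries_succ_iff.2 fun y => ?_
    have hyx : ⁅y, x⁆ ∈ Subgroup.upperCentralSeries G n := ih _ fun l hl =>
      (iteratedCommutator_append l [y] x).symm.trans (hx _ (by rw [List.length_append, hl]; rfl))
    exact commutatorElement_inv y x ▸ inv_mem hyx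

theorem IsSection.map_iteratedCommutator {N X Y : Subgroup G} [N.Normal] [X.Normal] {A : Type*}
    [AddCommGroup A] {q : X →* Multiplicative A} {ρ : Representation ℤ (G ⧸ N) A}
    (h : IsSection X Y q ρ) (l : List G) (x : X) :
    (q ⟨iteratedCommutator l x, iteratedCommutator_mem l x.2⟩).toAdd =
      (l.map fun g : G => ρ g - 1).prod (q x).toAdd := by
  induction l with
  | nil => rfl
  | cons g l ih =>
    rw [List.map_cons, List.prod_cons, End.mul_apply, ← ih, LinearMap.sub_apply, h.apply_toAdd,
      End.one_apply, ← toAdd_div, ← map_div, div_eq_mul_inv]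
    rfl

namespace HasMinimaxAbelianSections

variable {S : Set ℕ} [Group.IsSolvable G]

theorem exists_iteratedCommutator_mem (hG : HasMinimaxAbelianSections S G) (X Y : Subgroup G)
    [X.Normal] [Y.Normal] (hXY : ⁅X, X⁆ ≤ Y) :
    ∃ H : Subgroup G, H.FiniteIndex ∧ ∃ n, ∀ l : List G, l.length = n → (∀ g ∈ l, g ∈ ⁅H, H⁆) →
      ∀ x ∈ X, iteratedCommutator l x ∈ Y := by
  obtain ⟨A, _, q, ρ, h⟩ := exists_isSection ⊥ X Y hXY
    (by rw [Subgroup.commutator_bot_left]; exact bot_le)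
  obtain ⟨H, hH, n, hn⟩ := (hG X A q h.surjective).isVirtuallyTriangular
    (ρ.comp (QuotientGroup.mk' ⊥))
  refine ⟨H, hH, n, fun l hl hlH x hx => (h.eq_one_iff ⟨_, iteratedCommutator_mem l hx⟩).1 ?_⟩
  exact (h.map_iteratedCommutator l ⟨x, hx⟩).trans (LinearMap.congr_fun (hn l hl hlH) _)

theorem exists_iteratedCommutator_mem_derivedSeries (hG : HasMinimaxAbelianSections S G) (d : ℕ) :
    ∃ H : Subgroup G, H.FiniteIndex ∧ ∃ n, ∀ l : List G, l.length = n → (∀ g ∈ l, g ∈ ⁅H, H⁆) →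
      ∀ x, iteratedCommutator l x ∈ derivedSeries G d := by
  induction d with
  | zero => exact ⟨⊤, inferInstance, 0, fun l _ _ x => Subgroup.mem_top _⟩
  | succ d ih =>
    obtain ⟨H, hH, n, hn⟩ := ih
    obtain ⟨K, hK, m, hm⟩ := hG.exists_iteratedCommutator_mem (derivedSeries G d)
      (derivedSeries G (d + 1)) le_rfl
    refine ⟨H ⊓ K, inferInstance, m + n, fun l hl hlHK x => ?_⟩
    rw [← List.take_append_drop m l, iteratedCommutator_append]
    refine hm _ (by rw [List.length_take, hl, min_eq_left (Nat.le_add_right m n)])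
      (fun g hg => ?_) _ (hn _ (by rw [List.length_drop, hl, Nat.add_sub_cancel_left])
      (fun g hg => ?_) x)
    · exact Subgroup.commutator_mono inf_le_right inf_le_right (hlHK g (List.mem_of_mem_take hg))
    · exact Subgroup.commutator_mono inf_le_left inf_le_left (hlHK g (List.mem_of_mem_drop hg))

theorem exists_normal_finiteIndex_isNilpotent_commutator (hG : HasMinimaxAbelianSections S G) :
    ∃ H : Subgroup G, H.Normal ∧ H.FiniteIndex ∧ Group.IsNilpotent (⁅H, H⁆ : Subgroup G) := by
  obtain ⟨d, hd⟩ := ‹Group.IsSolvable G›.solvable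
  obtain ⟨H, hH, n, hn⟩ := hG.exists_iteratedCommutator_mem_derivedSeries d
  refine ⟨H.normalCore, inferInstance, inferInstance,
    isNilpotent_of_iteratedCommutator_eq_one n fun l hl x => Subtype.ext ?_⟩
  have hmem := hn (l.map (Subgroup.subtype _)) (by rwa [List.length_map]) (fun g hg => by
    obtain ⟨y, -, rfl⟩ := List.mem_map.1 hg
    exact Subgroup.commutator_mono H.normalCore_le H.normalCore_le y.2) x
  rw [hd, Subgroup.mem_bot] at hmem
  exact (map_iteratedCommutator (Subgroup.subtype _) l x).trans hmem

end HasMinimaxAbelianSections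

end IteratedCommutator

/-! ### Bounded torsion -/

theorem exists_nsmul_eq_zero_of_isOfFinAddOrder {R M : Type*} [Ring R] [AddCommGroup M]
    [Module R M] [IsNoetherian R M] :
    ∃ e : ℕ, e ≠ 0 ∧ ∀ m : M, IsOfFinAddOrder m → e • m = 0 := by
  let torsionBy : ℕ →o Submodule R M :=
    ⟨fun n => LinearMap.ker (n.factorial • (LinearMap.id : M →ₗ[R] M)), fun i j hij m hm => by
      obtain ⟨k, hk⟩ := Nat.factorial_dvd_factorial hij
      simp only [LinearMap.mem_ker, LinearMap.smul_apply, LinearMap.id_apply] at hm ⊢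
      rw [hk, mul_nsmul, hm, nsmul_zero]⟩
  obtain ⟨n, hn⟩ := monotone_stabilizes_iff_noetherian.2 ‹IsNoetherian R M› torsionBy
  refine ⟨n.factorial, n.factorial_ne_zero, fun m hm => ?_⟩
  have hmem : m ∈ torsionBy (n + addOrderOf m) :=
    addOrderOf_dvd_iff_nsmul_eq_zero.1 <|
      Nat.dvd_factorial hm.addOrderOf_pos (Nat.le_add_left _ n)
  rwa [← hn _ (Nat.le_add_right n _)] at hmem

-- P. Hall: `ℤ[Q]` is Noetherian.
theorem exists_nsmul_eq_zero_of_commGroup_fg {Q A : Type*} [CommGroup Q] [Group.FG Q]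
    [AddCommGroup A] (σ : Representation ℤ Q A) {F : Set A} (hF : F.Finite)
    (hgen : ∀ W : AddSubgroup A, F ⊆ W → (∀ g, ∀ w ∈ W, σ g w ∈ W) → W = ⊤) :
    ∃ e : ℕ, e ≠ 0 ∧ ∀ a : A, IsOfFinAddOrder a → e • a = 0 := by
  have : Monoid.FG Q := Group.fg_iff_monoid_fg.1 inferInstance
  have : IsNoetherianRing (MonoidAlgebra ℤ Q) :=
    Algebra.FiniteType.isNoetherianRing ℤ (MonoidAlgebra ℤ Q)
  let W : Submodule (MonoidAlgebra ℤ Q) σ.asModule :=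
    Submodule.span _ (σ.asModuleEquiv.symm '' F)
  have hFW : ∀ x ∈ F, σ.asModuleEquiv.symm x ∈ W := fun x hx =>
    Submodule.subset_span ⟨x, hx, rfl⟩
  have hW : W.toAddSubgroup.comap σ.asModuleEquiv.symm.toAddEquiv.toAddMonoidHom = ⊤ := by
    refine hgen _ hFW fun g w hw => ?_
    change σ.asModuleEquiv.symm (σ g w) ∈ W
    rw [Representation.asModuleEquiv_symm_map_rho]
    exact W.smul_mem _ hw
  have hfinite : Module.Finite (MonoidAlgebra ℤ Q) σ.asModule :=
    ⟨Submodule.fg_def.2 ⟨_, hF.image _, (Submodule.eq_top_iff'.2 fun x =>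
      (AddSubgroup.eq_top_iff' _).1 hW (σ.asModuleEquiv x) : W = ⊤)⟩⟩
  exact exists_nsmul_eq_zero_of_isOfFinAddOrder (R := MonoidAlgebra ℤ Q) (M := σ.asModule)

theorem commutator_le_of_closure_eq {G : Type*} [Group G] {s : Set G} {H P : Subgroup G}
    (hsH : Subgroup.closure s = H) (hP : ∀ h ∈ H, ∀ x ∈ P, h * x * h⁻¹ ∈ P)
    (hs : ∀ a ∈ s, ∀ b ∈ s, ⁅a, b⁆ ∈ P) : ⁅H, H⁆ ≤ P := by
  subst hsH
  refine Subgroup.commutator_le.2 fun a ha b hb => ?_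
  induction ha, hb using Subgroup.closure_induction₂ with
  | mem x y hx hy => exact hs x hx y hy
  | one_left x _ => rw [commutatorElement_one_left]; exact P.one_mem
  | one_right x _ => rw [commutatorElement_one_right]; exact P.one_mem
  | mul_left x y z hx hy hz hxz hyz =>
    rw [commutatorElement_mul_left_eq_conj_mul]
    exact P.mul_mem (hP x hx _ hyz) hxz
  | mul_right y z x hy hz hx hxy hxz =>
    rw [commutatorElement_mul_right_eq_mul_conj, mul_assoc, mul_assoc, ← mul_assoc y]
    exact P.mul_mem hxy (hP y hy _ hxz)
  | inv_left x y hx hy hxy =>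
    simpa [commutatorElement_def, mul_assoc] using hP _ (inv_mem hx) _ (P.inv_mem hxy)
  | inv_right x y hx hy hxy =>
    simpa [commutatorElement_def, mul_assoc] using hP _ (inv_mem hy) _ (P.inv_mem hxy)

theorem isMulCommutative_map_mk'_commutator {G : Type*} [Group G] (H : Subgroup G) [H.Normal] :
    IsMulCommutative (H.map (QuotientGroup.mk' ⁅H, H⁆)) := by
  rw [← Subgroup.commutator_self_eq_bot_iff, ← Subgroup.map_commutator]
  exact (Subgroup.map_eq_bot_iff _).2 (QuotientGroup.ker_mk' _).ge

theorem IsSection.exists_nsmul_eq_zero {G : Type u} {A : Type*} [Group G] [Group.FG G]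
    [AddCommGroup A] {H Y : Subgroup G} [H.Normal] [H.FiniteIndex]
    {q : (⁅H, H⁆ : Subgroup G) →* Multiplicative A} {ρ : Representation ℤ (G ⧸ ⁅H, H⁆) A}
    (h : IsSection ⁅H, H⁆ Y q ρ) :
    ∃ e : ℕ, e ≠ 0 ∧ ∀ a : A, IsOfFinAddOrder a → e • a = 0 := by
  have hHfg : Group.FG H := inferInstance
  obtain ⟨s, hs⟩ := (Group.fg_iff_subgroup_fg H).1 hHfg
  have hsH {a : G} (ha : a ∈ s) : a ∈ H := hs ▸ Subgroup.subset_closure ha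
  let R : Subgroup (G ⧸ ⁅H, H⁆) := H.map (QuotientGroup.mk' ⁅H, H⁆)
  have hR : IsMulCommutative R := isMulCommutative_map_mk'_commutator H
  let : CommGroup R := { mul_comm := mul_comm' }
  have : Group.FG R :=
    Group.fg_of_surjective ((QuotientGroup.mk' ⁅H, H⁆).subgroupMap_surjective H)
  let F : Set A := Set.range fun ab : s × s => (q ⟨⁅(ab.1 : G), (ab.2 : G)⁆,
    Subgroup.commutator_mem_commutator (hsH ab.1.2) (hsH ab.2.2)⟩).toAdd
  refine exists_nsmul_eq_zero_of_commGroup_fg (ρ.comp R.subtype) (Set.finite_range _ : F.Finite)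
    fun W hFW hW => eq_top_of_le_sectionPreimage h.surjective ?_
  refine commutator_le_of_closure_eq hs ?_ fun a ha b hb =>
    coe_mem_sectionPreimage.2 (hFW ⟨(⟨a, ha⟩, ⟨b, hb⟩), rfl⟩)
  rintro g hg _ ⟨x, hx, rfl⟩
  refine coe_mem_sectionPreimage (x := MulAut.conjNormal g x).2 ?_
  rw [← h.apply_toAdd]
  exact hW ⟨g, g, hg, rfl⟩ _ hx

/-! ### The commutator pairing on lower central factors -/

theorem commutatorElement_mem_lowerCentralSeries {G : Type*} [Group G] {N : Subgroup G} {i : ℕ}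
    {x n : G} (hx : x ∈ N.lowerCentralSeries i) (hn : n ∈ N) :
    ⁅x, n⁆ ∈ N.lowerCentralSeries (i + 1) :=
  Subgroup.commutator_mem_commutator hx hn

namespace IsSection

variable {G : Type u} [Group G] {N : Subgroup G} [N.Normal]

theorem map_conjNormal {X Y : Subgroup G} [X.Normal] {A : Type*} [AddCommGroup A]
    {q : X →* Multiplicative A} {ρ : Representation ℤ (G ⧸ N) A} (h : IsSection X Y q ρ) {n : G}
    (hn : n ∈ N) (x : X) : q (MulAut.conjNormal n x) = q x :=
  Multiplicative.toAdd.injective <| by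
    rw [← h.apply_toAdd, (QuotientGroup.eq_one_iff n).2 hn, map_one, End.one_apply]

variable {i : ℕ} {E : Type*} [AddCommGroup E]
  {p : N.lowerCentralSeries (i + 1) →* Multiplicative E} {υ : Representation ℤ (G ⧸ N) E}

/-- The bilinear map `(x, n) ↦ ⁅x, n⁆` with values in the factor `E` of the lower central series
of `N` that starts at `N.lowerCentralSeries (i + 1)`. -/
def commutatorPairing
    (h : IsSection (N.lowerCentralSeries (i + 1)) (N.lowerCentralSeries (i + 2)) p υ) :
    N.lowerCentralSeries i →* N →* Multiplicative E :=
  MonoidHom.mk' (fun x => MonoidHom.mk'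
      (fun n => p ⟨⁅(x : G), (n : G)⁆, commutatorElement_mem_lowerCentralSeries x.2 n.2⟩)
      fun n m => by
        rw [← h.map_conjNormal n.2 ⟨⁅(x : G), (m : G)⁆, _⟩, ← map_mul]
        refine congrArg p (Subtype.ext ((commutatorElement_mul_right_eq_mul_conj _ _ _).trans ?_))
        rw [mul_assoc, mul_assoc, ← mul_assoc (n : G)]
        rfl)
    fun x y => MonoidHom.ext fun n => by
      have hx : (x : G) ∈ N := N.lowerCentralSeries_le_self i x.2
      change p _ = p _ * p _
      rw [mul_comm, ← h.map_conjNormal hx ⟨⁅(y : G), (n : G)⁆, _⟩, ← map_mul]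
      exact congrArg p (Subtype.ext (commutatorElement_mul_left_eq_conj_mul _ _ _))

variable (h : IsSection (N.lowerCentralSeries (i + 1)) (N.lowerCentralSeries (i + 2)) p υ)

theorem commutatorPairing_eq_one_left {x : N.lowerCentralSeries i}
    (hx : (x : G) ∈ N.lowerCentralSeries (i + 1)) (n : N) : h.commutatorPairing x n = 1 :=
  (h.eq_one_iff _).2 (commutatorElement_mem_lowerCentralSeries hx n.2)

theorem commutatorPairing_eq_one_right (x : N.lowerCentralSeries i) {n : N}
    (hn : (n : G) ∈ ⁅N, N⁆) : h.commutatorPairing x n = 1 := by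
  rw [← Subgroup.map_subtype_commutator] at hn
  exact Abelianization.commutator_subset_ker _ ((Subgroup.mem_map_iff_mem N.subtype_injective).1 hn)

theorem commutatorPairing_conjNormal (g : G) (x : N.lowerCentralSeries i) (n : N) :
    (h.commutatorPairing (MulAut.conjNormal g x) (MulAut.conjNormal g n)).toAdd =
      υ g (h.commutatorPairing x n).toAdd := by
  refine Eq.trans (congrArg (fun z => (p z).toAdd) (Subtype.ext ?_)) (h.apply_toAdd g _).symm
  simp only [MulAut.conjNormal_apply]
  exact (map_commutatorElement (MulAut.conj g).toMonoidHom (x : G) n).symm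

theorem eq_top_of_commutatorPairing_mem {W : AddSubgroup E}
    (hW : ∀ x n, (h.commutatorPairing x n).toAdd ∈ W) : W = ⊤ :=
  eq_top_of_le_sectionPreimage h.surjective <|
    Subgroup.commutator_le.2 fun x hx n hn =>
      coe_mem_sectionPreimage (x := ⟨_, commutatorElement_mem_lowerCentralSeries hx hn⟩).2
        (hW ⟨x, hx⟩ ⟨n, hn⟩)

end IsSection

theorem exists_isSection_lowerCentralSeries {G : Type u} [Group G] (N : Subgroup G) [N.Normal]
    (i : ℕ) :
    ∃ (A : Type u) (_ : AddCommGroup A) (q : N.lowerCentralSeries i →* Multiplicative A)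
      (ρ : Representation ℤ (G ⧸ N) A),
      IsSection (N.lowerCentralSeries i) (N.lowerCentralSeries (i + 1)) q ρ :=
  exists_isSection N _ _ (Subgroup.commutator_mono le_rfl (N.lowerCentralSeries_le_self i))
    (Subgroup.commutator_comm _ _).le

/-! ### Torsion-free covers -/

theorem exists_bilinear_of_surjective {X N C D E : Type*} [Group X] [Group N] [AddCommGroup C]
    [AddCommGroup D] [AddCommGroup E] {q : X →* Multiplicative C} (hq : Surjective q)
    {r : N →* Multiplicative D} (hr : Surjective r) (b : X →* N →* Multiplicative E)
    (hbq : ∀ x n, q x = 1 → b x n = 1) (hbr : ∀ x n, r n = 1 → b x n = 1) :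
    ∃ β : C →ₗ[ℤ] D →ₗ[ℤ] E, ∀ x n, β (q x).toAdd (r n).toAdd = (b x n).toAdd := by
  have hb {x y : X} {n m : N} (hxy : q x = q y) (hnm : r n = r m) : b x n = b y m := by
    have hx := hbq (x * y⁻¹) n (by rw [map_mul, map_inv, hxy, mul_inv_cancel])
    have hn := hbr y (n * m⁻¹) (by rw [map_mul, map_inv, hnm, mul_inv_cancel])
    rw [map_mul, map_inv, MonoidHom.mul_apply, MonoidHom.inv_apply, mul_inv_eq_one] at hx
    rw [map_mul, map_inv, mul_inv_eq_one] at hn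
    exact hx.trans hn
  let s (c : C) : X := surjInv hq (.ofAdd c)
  let t (d : D) : N := surjInv hr (.ofAdd d)
  have hs (c : C) : q (s c) = .ofAdd c := surjInv_eq hq _
  have ht (d : D) : r (t d) = .ofAdd d := surjInv_eq hr _
  let β (c : C) : D →ₗ[ℤ] E := (AddMonoidHom.mk' (fun d => (b (s c) (t d)).toAdd) fun d d' => by
    rw [← toAdd_mul, ← map_mul]
    exact congrArg _ (hb rfl (by rw [map_mul, ht, ht, ht, ofAdd_add]))).toIntLinearMap
  have hβ (c c' : C) : β (c + c') = β c + β c' := LinearMap.ext fun d => by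
    change (b _ _).toAdd = (b (s c) (t d) * b (s c') (t d)).toAdd
    rw [← MonoidHom.mul_apply, ← map_mul]
    exact congrArg _ (hb (by rw [map_mul, hs, hs, hs, ofAdd_add]) rfl)
  exact ⟨(AddMonoidHom.mk' β hβ).toIntLinearMap, fun x n =>
    congrArg Multiplicative.toAdd (hb (hs (q x).toAdd) (ht (r n).toAdd))⟩

/-- Up to bounded index, `σ` is the image of a torsion-free `S`-minimax representation. -/
def HasTorsionFreeCover (S : Set ℕ) {Q : Type*} {C : Type u} [Group Q] [AddCommGroup C]
    (σ : Representation ℤ Q C) : Prop :=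
  ∃ (M : Type u) (_ : AddCommGroup M) (ρ : Representation ℤ Q M) (f : M →ₗ[ℤ] C) (e : ℕ),
    AbelianMinimax S M ∧ IsTorsionFree ℤ M ∧ (∀ g m, f (ρ g m) = σ g (f m)) ∧ e ≠ 0 ∧
      ∀ c, ∃ m, f m = e • c

section HasTorsionFreeCover

variable {S : Set ℕ} {Q : Type*} [Group Q] {C D E : Type u} [AddCommGroup C] [AddCommGroup D]
  [AddCommGroup E]

-- Any `ℤ`-module structure is allowed, since that of a tensor product is not definitionally the
-- one of its additive group.
theorem HasTorsionFreeCover.intro {σ : Representation ℤ Q C} {M : Type u} [AddCommGroup M]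
    {inst : Module ℤ M} (hM : AbelianMinimax S M) (hMtf : IsTorsionFree ℤ M)
    (ρ : Representation ℤ Q M) (f : M →ₗ[ℤ] C) (hf : ∀ g m, f (ρ g m) = σ g (f m)) {e : ℕ}
    (he : e ≠ 0) (hfe : ∀ c, ∃ m, f m = e • c) : HasTorsionFreeCover S σ := by
  obtain rfl : inst = AddCommGroup.toIntModule M := Subsingleton.elim _ _
  exact ⟨M, _, ρ, f, e, hM, hMtf, hf, he, hfe⟩

-- The multiples of `e` form a torsion-free subrepresentation.
theorem AbelianMinimax.hasTorsionFreeCover (hC : AbelianMinimax S C) (σ : Representation ℤ Q C)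
    {e : ℕ} (he : e ≠ 0) (htors : ∀ c : C, IsOfFinAddOrder c → e • c = 0) :
    HasTorsionFreeCover S σ := by
  let W : Submodule ℤ C := LinearMap.range (e • (LinearMap.id : C →ₗ[ℤ] C))
  have hW : ∀ g, W ≤ W.comap (σ g) := by
    rintro g _ ⟨c, rfl⟩
    exact ⟨σ g c, (map_nsmul (σ g) e c).symm⟩
  refine ⟨W, inferInstance, σ.subrepresentation W hW, W.subtype, e, hC.addSubgroup W.toAddSubgroup,
    ?_, fun _ _ => rfl, he, fun c => ⟨⟨e • c, c, rfl⟩, rfl⟩⟩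
  rw [Module.isTorsionFree_iff_smul_eq_zero]
  rintro n ⟨_, c, rfl⟩ hn
  refine or_iff_not_imp_left.2 fun hn0 => Subtype.ext (htors c ?_)
  refine isOfFinAddOrder_iff_zsmul_eq_zero.2 ⟨n * e, mul_ne_zero hn0 (Nat.cast_ne_zero.2 he), ?_⟩
  rw [mul_smul, natCast_zsmul]
  exact congrArg Subtype.val hn

theorem HasTorsionFreeCover.of_bilinear {σ : Representation ℤ Q C} {τ : Representation ℤ Q D}
    {υ : Representation ℤ Q E} (hσ : HasTorsionFreeCover S σ) (hτ : HasTorsionFreeCover S τ)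
    (β : C →ₗ[ℤ] D →ₗ[ℤ] E) (hβ : ∀ g c d, β (σ g c) (τ g d) = υ g (β c d))
    (hspan : ∀ W : AddSubgroup E, (∀ c d, β c d ∈ W) → W = ⊤) : HasTorsionFreeCover S υ := by
  obtain ⟨M, _, ρ, f, e, hM, hMtf, hf, he, hfe⟩ := hσ
  obtain ⟨M', _, ρ', f', e', hM', hMtf', hf', he', hfe'⟩ := hτ
  refine .intro (inst := TensorProduct.leftModule) (hM.tensor hM') Flat.isTorsionFree (ρ.tprod ρ')
    (TensorProduct.lift (β.compl₁₂ f f')) (fun g m => ?_) (mul_ne_zero he he') fun c => ?_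
  · induction m with
    | zero => simp only [map_zero]
    | add x y hx hy => simp only [map_add, hx, hy]
    | tmul x y =>
      rw [Representation.tprod_apply, TensorProduct.map_tmul, TensorProduct.lift.tmul,
        TensorProduct.lift.tmul, LinearMap.compl₁₂_apply, LinearMap.compl₁₂_apply, hf, hf', hβ]
  · let W : AddSubgroup E := (TensorProduct.lift (β.compl₁₂ f f')).toAddMonoidHom.range.comap
      (DistribSMul.toAddMonoidHom E (e * e'))
    have hW : W = ⊤ := hspan W fun c d => by
      obtain ⟨m, hm⟩ := hfe c
      obtain ⟨m', hm'⟩ := hfe' d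
      refine ⟨m ⊗ₜ m', ?_⟩
      change β (f m) (f' m') = (e * e') • β c d
      rw [hm, hm', map_nsmul, map_nsmul, LinearMap.smul_apply, mul_comm, mul_smul]
    exact (AddSubgroup.eq_top_iff' W).1 hW c

end HasTorsionFreeCover

section LowerCentralSeries

variable {S : Set ℕ} {G : Type u} [Group G] {N : Subgroup G} [N.Normal] {i : ℕ}

theorem IsSection.hasTorsionFreeCover_succ {C D E : Type u} [AddCommGroup C] [AddCommGroup D]
    [AddCommGroup E] {q : N.lowerCentralSeries i →* Multiplicative C} {r : N →* Multiplicative D}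
    {p : N.lowerCentralSeries (i + 1) →* Multiplicative E} {σ : Representation ℤ (G ⧸ N) C}
    {τ : Representation ℤ (G ⧸ N) D} {υ : Representation ℤ (G ⧸ N) E}
    (hq : IsSection (N.lowerCentralSeries i) (N.lowerCentralSeries (i + 1)) q σ)
    (hr : IsSection N ⁅N, N⁆ r τ)
    (hp : IsSection (N.lowerCentralSeries (i + 1)) (N.lowerCentralSeries (i + 2)) p υ)
    (hσ : HasTorsionFreeCover S σ) (hτ : HasTorsionFreeCover S τ) : HasTorsionFreeCover S υ := by
  obtain ⟨β, hβ⟩ := exists_bilinear_of_surjective hq.surjective hr.surjective hp.commutatorPairing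
    (fun x n hx => hp.commutatorPairing_eq_one_left ((hq.eq_one_iff x).1 hx) n)
    (fun x n hn => hp.commutatorPairing_eq_one_right x ((hr.eq_one_iff n).1 hn))
  refine hσ.of_bilinear hτ β (fun g c d => ?_) fun W hW =>
    hp.eq_top_of_commutatorPairing_mem fun x n => hβ x n ▸ hW _ _
  obtain ⟨g, rfl⟩ := QuotientGroup.mk_surjective g
  obtain ⟨x, rfl⟩ := hq.exists_toAdd_eq c
  obtain ⟨n, rfl⟩ := hr.exists_toAdd_eq d
  rw [hq.apply_toAdd, hr.apply_toAdd, hβ, hβ, hp.commutatorPairing_conjNormal]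

theorem HasMinimaxAbelianSections.hasTorsionFreeCover [Group.FG G]
    (hG : HasMinimaxAbelianSections S G) {H : Subgroup G} [H.Normal] [H.FiniteIndex] (i : ℕ)
    {C : Type u} [AddCommGroup C]
    {q : (⁅H, H⁆ : Subgroup G).lowerCentralSeries i →* Multiplicative C}
    {σ : Representation ℤ (G ⧸ ⁅H, H⁆) C}
    (h : IsSection ((⁅H, H⁆ : Subgroup G).lowerCentralSeries i)
      ((⁅H, H⁆ : Subgroup G).lowerCentralSeries (i + 1)) q σ) :
    HasTorsionFreeCover S σ := by
  have h_zero {D : Type u} [AddCommGroup D] {r : (⁅H, H⁆ : Subgroup G) →* Multiplicative D}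
      {τ : Representation ℤ (G ⧸ ⁅H, H⁆) D} (hr : IsSection ⁅H, H⁆ ⁅⁅H, H⁆, ⁅H, H⁆⁆ r τ) :
      HasTorsionFreeCover S τ := by
    obtain ⟨e, he, htors⟩ := hr.exists_nsmul_eq_zero
    exact (hG _ D r hr.surjective).hasTorsionFreeCover τ he htors
  induction i generalizing C with
  | zero => exact h_zero h
  | succ i ih =>
    obtain ⟨D, _, r, τ, hr⟩ := exists_isSection_lowerCentralSeries (⁅H, H⁆ : Subgroup G) 0
    obtain ⟨C, _, q, σ, hq⟩ := exists_isSection_lowerCentralSeries (⁅H, H⁆ : Subgroup G) i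
    exact hq.hasTorsionFreeCover_succ hr h (ih hq) (h_zero hr)

end LowerCentralSeries

/-! ### Torsion in nilpotent groups -/

theorem IsSection.torsion_eq_top {G : Type u} [Group G] {N : Subgroup G} [N.Normal] {s : Set G}
    (hs : Subgroup.closure s = N) (hsf : ∀ a ∈ s, IsOfFinOrder a) {i : ℕ} {A : Type u}
    [AddCommGroup A] {q : N.lowerCentralSeries i →* Multiplicative A}
    {ρ : Representation ℤ (G ⧸ N) A}
    (h : IsSection (N.lowerCentralSeries i) (N.lowerCentralSeries (i + 1)) q ρ) :
    AddCommGroup.torsion A = ⊤ := by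
  induction i generalizing A with
  | zero =>
    refine eq_top_of_le_sectionPreimage (X := N) h.surjective
      (hs.ge.trans ((Subgroup.closure_le _).2 fun a ha => ?_))
    have haN : a ∈ N := hs ▸ Subgroup.subset_closure ha
    have haf : IsOfFinOrder (⟨a, haN⟩ : N) := Submonoid.isOfFinOrder_coe.1 (hsf a ha)
    exact coe_mem_sectionPreimage.2 (show (q ⟨a, haN⟩).toAdd ∈ _ from q.isOfFinOrder haf)
  | succ i ih =>
    obtain ⟨C, _, r, σ, hr⟩ := exists_isSection_lowerCentralSeries N i
    refine h.eq_top_of_commutatorPairing_mem fun x n => ?_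
    have hx : IsOfFinOrder (r x) := (AddSubgroup.eq_top_iff' _).1 (ih hr) (r x).toAdd
    obtain ⟨k, hk, hxk⟩ := isOfFinOrder_iff_pow_eq_one.1 hx
    rw [← map_pow, hr.eq_one_iff] at hxk
    have hb := h.commutatorPairing_eq_one_left hxk n
    rw [map_pow, MonoidHom.pow_apply] at hb
    exact isOfFinAddOrder_iff_nsmul_eq_zero.2 ⟨k, hk, hb⟩

theorem isOfFinOrder_of_closure_eq_top {G : Type u} [Group G] [Group.IsNilpotent G] {s : Set G}
    (hs : Subgroup.closure s = ⊤) (hsf : ∀ a ∈ s, IsOfFinOrder a) (g : G) : IsOfFinOrder g := by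
  have hpow (i : ℕ) : ∃ k > 0, g ^ k ∈ (⊤ : Subgroup G).lowerCentralSeries i := by
    induction i with
    | zero => exact ⟨1, one_pos, Subgroup.mem_top _⟩
    | succ i ih =>
      obtain ⟨k, hk, hgk⟩ := ih
      obtain ⟨A, _, q, ρ, h⟩ := exists_isSection_lowerCentralSeries (⊤ : Subgroup G) i
      have hq : IsOfFinOrder (q ⟨g ^ k, hgk⟩) :=
        (AddSubgroup.eq_top_iff' _).1 (h.torsion_eq_top hs hsf) (q ⟨g ^ k, hgk⟩).toAdd
      obtain ⟨l, hl, hgl⟩ := isOfFinOrder_iff_pow_eq_one.1 hq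
      rw [← map_pow, h.eq_one_iff] at hgl
      exact ⟨k * l, Nat.mul_pos hk hl, pow_mul g k l ▸ hgl⟩
  obtain ⟨n, hn⟩ := (Subgroup.isNilpotent_iff_lowerCentralSeries (⊤ : Subgroup G)).1 inferInstance
  obtain ⟨k, hk, hgk⟩ := hpow n
  rw [hn, Subgroup.mem_bot] at hgk
  exact isOfFinOrder_iff_pow_eq_one.2 ⟨k, hk, hgk⟩

theorem isOfFinOrder_mul_of_isNilpotent {G : Type u} [Group G] [Group.IsNilpotent G] {a b : G}
    (ha : IsOfFinOrder a) (hb : IsOfFinOrder b) : IsOfFinOrder (a * b) := by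
  have hab : a * b ∈ Subgroup.closure {a, b} :=
    mul_mem (Subgroup.subset_closure (.inl rfl)) (Subgroup.subset_closure (.inr rfl))
  refine Submonoid.isOfFinOrder_coe.2 (isOfFinOrder_of_closure_eq_top
    Subgroup.closure_closure_coe_preimage ?_ (⟨a * b, hab⟩ : Subgroup.closure {a, b}))
  rintro c (hc | hc) <;> refine Submonoid.isOfFinOrder_coe.1 ?_ <;> rwa [hc]

theorem exists_normal_mem_iff_isOfFinOrder {G : Type u} [Group G] (N : Subgroup G) [hN : N.Normal]
    [Group.IsNilpotent N] : ∃ T : Subgroup G, T.Normal ∧ ∀ g, g ∈ T ↔ g ∈ N ∧ IsOfFinOrder g := by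
  let T : Subgroup G :=
    { carrier := {g | g ∈ N ∧ IsOfFinOrder g}
      mul_mem' := fun {a b} ha hb => ⟨N.mul_mem ha.1 hb.1,
        N.subtype.isOfFinOrder (isOfFinOrder_mul_of_isNilpotent (a := ⟨a, ha.1⟩) (b := ⟨b, hb.1⟩)
          (Submonoid.isOfFinOrder_coe.1 ha.2) (Submonoid.isOfFinOrder_coe.1 hb.2))⟩
      one_mem' := ⟨N.one_mem, .one⟩
      inv_mem' := fun ha => ⟨N.inv_mem ha.1, ha.2.inv⟩ }
  exact ⟨T, ⟨fun t ht g => ⟨hN.conj_mem t ht.1 g, (MulAut.conj g).toMonoidHom.isOfFinOrder ht.2⟩⟩,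
    fun _ => Iff.rfl⟩

/-! ### Admissible series -/

/-- The conditions that `MemClassU` imposes on two consecutive terms `Y ≤ X` of the series of the
torsion subgroup of `N`, with the spectrum of the group replaced by `S`. -/
structure IsAdmissibleStep (S : Set ℕ) {G : Type} [Group G] (N : Subgroup G) [N.Normal]
    (Y X : Subgroup G) : Prop where
  le : Y ≤ X
  normal : X.Normal
  commutator_mem (n t : G) : n ∈ N → t ∈ X → n * t * n⁻¹ * t⁻¹ ∈ Y
  exists_niceRep : Y.relIndex X = 0 →
    ∃ M : Rep.{0} ℤ (G ⧸ N), NiceRep S M ∧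
      ∃ φ : M → G,
        (∀ m : M, φ m ∈ X) ∧
        (∀ m m' : M, (φ (m + m'))⁻¹ * (φ m * φ m') ∈ Y) ∧
        (∀ t : G, t ∈ X → ∃ m : M, (φ m)⁻¹ * t ∈ Y) ∧
        (∀ (g : G) (m : M), (φ (M.ρ (QuotientGroup.mk g) m))⁻¹ * (g * φ m * g⁻¹) ∈ Y)

section IsAdmissibleStep

variable {S : Set ℕ} {G : Type} [Group G] {N L L' X : Subgroup G} [N.Normal] [L.Normal]
  [hX : X.Normal] {C M : Type} [AddCommGroup C] [AddCommGroup M] {q : L →* Multiplicative C}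
  {σ : Representation ℤ (G ⧸ N) C} {ρ : Representation ℤ (G ⧸ N) M} {f : M →ₗ[ℤ] C}

theorem niceRep_of (hM : AbelianMinimax S M) [IsTorsionFree ℤ M] (ρ : Representation ℤ (G ⧸ N) M) :
    NiceRep S (Rep.of ρ) := by
  refine ⟨fun m hm hmf => hm ?_, hM.finiteRankAbelian, hM.addSpectrum_subset⟩
  obtain ⟨k, hk, hkm⟩ := hmf.exists_nsmul_eq_zero
  rw [← natCast_zsmul] at hkm
  exact (smul_eq_zero.1 hkm).resolve_left (Nat.cast_ne_zero.2 hk.ne')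

theorem IsSection.exists_lift (h : IsSection L L' q σ) (hXL : X ≤ L)
    (hf : ∀ g m, f (ρ g m) = σ g (f m))
    (hfX : ∀ m, ∃ x : L, (x : G) ∈ X ∧ (q x).toAdd = f m)
    (hXf : ∀ x : L, (x : G) ∈ X → ∃ m, f m = (q x).toAdd) :
    ∃ φ : M → G, (∀ m, φ m ∈ X) ∧ (∀ m m', (φ (m + m'))⁻¹ * (φ m * φ m') ∈ X ⊓ L') ∧
      (∀ t ∈ X, ∃ m, (φ m)⁻¹ * t ∈ X ⊓ L') ∧
      ∀ (g : G) m, (φ (ρ g m))⁻¹ * (g * φ m * g⁻¹) ∈ X ⊓ L' := by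
  choose φ hφX hφ using hfX
  have mem_inf {x y : L} (hx : (x : G) ∈ X) (hy : (y : G) ∈ X) (hxy : (q x).toAdd = (q y).toAdd) :
      (x : G)⁻¹ * y ∈ X ⊓ L' :=
    ⟨X.mul_mem (X.inv_mem hx) hy, h.eq_iff.1 hxy⟩
  refine ⟨fun m => φ m, hφX, fun m m' => ?_, fun t ht => ?_, fun g m => ?_⟩
  · refine mem_inf (y := φ m * φ m') (hφX _) (X.mul_mem (hφX m) (hφX m')) ?_
    rw [hφ, map_add, map_mul, toAdd_mul, hφ, hφ]
  · obtain ⟨m, hm⟩ := hXf ⟨t, hXL ht⟩ ht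
    exact ⟨m, mem_inf (y := ⟨t, hXL ht⟩) (hφX m) ht ((hφ m).trans hm)⟩
  · refine mem_inf (y := MulAut.conjNormal g (φ m)) (hφX _) (hX.conj_mem _ (hφX m) g) ?_
    rw [hφ, hf, ← h.apply_toAdd, hφ]

theorem IsSection.isAdmissibleStep_of_le_range (h : IsSection L L' q σ) (hNL : ⁅N, L⁆ ≤ L')
    (hM : AbelianMinimax S M) [IsTorsionFree ℤ M] (hf : ∀ g m, f (ρ g m) = σ g (f m))
    (hXf : X ≤ sectionPreimage q f.range.toAddSubgroup) : IsAdmissibleStep S N (X ⊓ L') X where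
  le := inf_le_left
  normal := hX
  commutator_mem n t hn ht :=
    ⟨X.mul_mem (hX.conj_mem t ht n) (X.inv_mem ht),
      hNL (Subgroup.commutator_mem_commutator hn (sectionPreimage_le (hXf ht)))⟩
  exists_niceRep _ := by
    let W : Submodule ℤ M := AddSubgroup.toIntSubmodule
      (((X.subgroupOf L).map q).toAddSubgroup'.comap f.toAddMonoidHom)
    have hW (g : G ⧸ N) : W ≤ W.comap (ρ g) := by
      rintro m ⟨x, hx, hxm⟩
      obtain ⟨g, rfl⟩ := QuotientGroup.mk_surjective g
      refine ⟨MulAut.conjNormal g x, hX.conj_mem _ hx g, ?_⟩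
      exact (h.apply_toAdd g x).symm.trans ((congrArg (σ g) hxm).trans (hf g m).symm)
    have hWM : AbelianMinimax S W := hM.addSubgroup W.toAddSubgroup
    refine ⟨_, niceRep_of hWM (ρ.subrepresentation W hW),
      h.exists_lift (f := f ∘ₗ W.subtype) (hXf.trans sectionPreimage_le) (fun g m => hf g m)
      (fun m => m.2) fun x hx => ?_⟩
    obtain ⟨m, hm⟩ := coe_mem_sectionPreimage.1 (hXf hx)
    exact ⟨⟨m, x, hx, hm.symm⟩, hm⟩

theorem IsSection.relIndex_sectionPreimage (h : IsSection L L' q σ) (W : AddSubgroup C) :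
    (sectionPreimage q W).relIndex L = W.index := by
  rw [Subgroup.relIndex, sectionPreimage, Subgroup.subgroupOf,
    Subgroup.comap_map_eq_self_of_injective L.subtype_injective,
    Subgroup.index_comap_of_surjective _ h.surjective, AddSubgroup.index_toSubgroup]

theorem AbelianMinimax.index_ne_zero (hC : AbelianMinimax S C) {e : ℕ} (he : e ≠ 0)
    {W : AddSubgroup C} (hW : ∀ c : C, e • c ∈ W) : W.index ≠ 0 := by
  have : Finite (C ⧸ W) :=
    (hC.of_surjective (QuotientAddGroup.mk' W) (QuotientAddGroup.mk'_surjective W)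
      ).finite_of_nsmul_eq_zero he fun a => by
        obtain ⟨c, rfl⟩ := QuotientAddGroup.mk_surjective a
        exact (QuotientAddGroup.eq_zero_iff _).2 (hW c)
  exact AddSubgroup.index_ne_zero_of_finite

theorem IsSection.reflTransGen_isAdmissibleStep (h : IsSection L L' q σ)
    (hC : AbelianMinimax S C) (hσ : HasTorsionFreeCover S σ) (hL : L' ≤ L) (hNL : ⁅N, L⁆ ≤ L')
    (hXL : X ≤ L) : Relation.ReflTransGen (IsAdmissibleStep S N) (X ⊓ L') X := by
  obtain ⟨M, _, ρ, f, e, hM, _, hf, he, hfe⟩ := hσ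
  let U : Subgroup G := sectionPreimage q f.range.toAddSubgroup
  have hLU : L' ≤ U := h.le_sectionPreimage hL _
  have hU : U.Normal := h.normal_sectionPreimage <| by
    rintro g _ ⟨m, rfl⟩
    exact ⟨ρ g m, hf g m⟩
  have lower_step : IsAdmissibleStep S N (X ⊓ U ⊓ L') (X ⊓ U) :=
    h.isAdmissibleStep_of_le_range hNL hM hf inf_le_right
  have upper_step : IsAdmissibleStep S N (X ⊓ U) X :=
    { le := inf_le_left
      normal := hX
      commutator_mem n t hn ht := ⟨X.mul_mem (hX.conj_mem t ht n) (X.inv_mem ht),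
        hLU (hNL (Subgroup.commutator_mem_commutator hn (hXL ht)))⟩
      exists_niceRep h0 := by
        rw [Subgroup.inf_relIndex_left] at h0
        have hindex := Subgroup.relIndex_eq_zero_of_le_right hXL h0
        rw [h.relIndex_sectionPreimage] at hindex
        exact absurd hindex (hC.index_ne_zero he hfe) }
  rw [inf_assoc, inf_eq_right.2 hLU] at lower_step
  exact .head lower_step (.single upper_step)

end IsAdmissibleStep

theorem exists_fin_chain_of_reflTransGen {α : Type*} {r : α → α → Prop} {a b : α}
    (h : Relation.ReflTransGen r a b) :
    ∃ (n : ℕ) (T : Fin (n + 1) → α), T 0 = a ∧ T (Fin.last n) = b ∧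
      ∀ i : Fin n, r (T i.castSucc) (T i.succ) := by
  induction h with
  | refl => exact ⟨0, fun _ => a, rfl, rfl, fun i => i.elim0⟩
  | @tail b c _ hbc ih =>
    obtain ⟨n, T, h_zero, h_last, hT⟩ := ih
    refine ⟨n + 1, Fin.snoc (α := fun _ => α) T c, ?_, Fin.snoc_last _ _, fun i => ?_⟩
    · rw [← Fin.castSucc_zero, Fin.snoc_castSucc, h_zero]
    · induction i using Fin.lastCases with
      | last => rwa [Fin.snoc_castSucc, Fin.succ_last, Fin.snoc_last, h_last]
      | cast j =>
        rw [Fin.snoc_castSucc, Fin.succ_castSucc, Fin.snoc_castSucc]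
        exact hT j

theorem HasMinimaxAbelianSections.reflTransGen_isAdmissibleStep {S : Set ℕ} {G : Type} [Group G]
    [Group.FG G] (hG : HasMinimaxAbelianSections S G) {H T : Subgroup G} [H.Normal]
    [H.FiniteIndex] [T.Normal] [hN : Group.IsNilpotent (⁅H, H⁆ : Subgroup G)] (hT : T ≤ ⁅H, H⁆) :
    Relation.ReflTransGen (IsAdmissibleStep S ⁅H, H⁆) ⊥ T := by
  let L (i : ℕ) : Subgroup G := (⁅H, H⁆ : Subgroup G).lowerCentralSeries i
  have hL (i : ℕ) : L (i + 1) ≤ L i := Subgroup.commutator_le_left _ _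
  have chain (i : ℕ) : Relation.ReflTransGen (IsAdmissibleStep S ⁅H, H⁆) (T ⊓ L i) T := by
    induction i with
    | zero => rw [inf_eq_left.2 (show T ≤ L 0 from hT)]
    | succ i ih =>
      obtain ⟨A, _, q, σ, h⟩ := exists_isSection_lowerCentralSeries (⁅H, H⁆ : Subgroup G) i
      have step := h.reflTransGen_isAdmissibleStep (X := T ⊓ L i) (hG _ A q h.surjective)
        (hG.hasTorsionFreeCover i h) (hL i) (Subgroup.commutator_comm _ _).le inf_le_right
      rw [inf_assoc, inf_eq_right.2 (hL i)] at step
      exact step.trans ih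
  obtain ⟨n, hn⟩ := (Subgroup.isNilpotent_iff_lowerCentralSeries _).1 hN
  have hbot : T ⊓ L n = ⊥ := hn ▸ inf_bot_eq T
  exact hbot ▸ chain n

/-! ### Finitely generated solvable minimax groups -/

theorem HasMinimaxAbelianSections.solvableOfFiniteRank {S : Set ℕ} {G : Type*} [Group G]
    [hsol : Group.IsSolvable G] (hG : HasMinimaxAbelianSections S G) : SolvableOfFiniteRank G := by
  refine ⟨hsol, fun H K hK hcomm => ?_⟩
  let : CommGroup (H ⧸ K) := { mul_comm := hcomm }
  obtain ⟨⟨n, hn⟩, hp⟩ := (hG H (Additive (H ⧸ K)) (QuotientGroup.mk' K)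
    (QuotientGroup.mk'_surjective K)).finiteRankAbelian
  exact ⟨⟨n, fun k ⟨f, hf⟩ => hn k ⟨MonoidHom.toAdditiveRight f, hf⟩⟩, hp⟩

theorem virtuallyAbelian_quotient_commutator {G : Type*} [Group G] (H : Subgroup G) [H.Normal]
    [H.FiniteIndex] : VirtuallyAbelian (G ⧸ ⁅H, H⁆) := by
  have := isMulCommutative_map_mk'_commutator H
  exact ⟨H.map (QuotientGroup.mk' ⁅H, H⁆), ne_zero_of_dvd_ne_zero H.index_ne_zero_of_finite
    (Subgroup.index_map_dvd H (QuotientGroup.mk'_surjective _)), mul_comm'⟩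

/-- Every finitely generated solvable minimax group lies in the class `𝒰`. -/
theorem fg_solvable_minimax_mem_classU (G : Type) [Group G] (hfg : Group.FG G)
    (hsol : IsSolvable G) (hmm : IsMinimax G) : MemClassU G := by
  have : Group.IsSolvable G := hsol
  have hG := hmm.hasMinimaxAbelianSections
  obtain ⟨H, _, _, hN⟩ := hG.exists_normal_finiteIndex_isNilpotent_commutator
  obtain ⟨T, _, hT⟩ := exists_normal_mem_iff_isOfFinOrder (⁅H, H⁆ : Subgroup G)
  obtain ⟨r, c, h_zero, h_last, hc⟩ := exists_fin_chain_of_reflTransGen <|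
    hG.reflTransGen_isAdmissibleStep (fun t ht => ((hT t).1 ht).1 : T ≤ ⁅H, H⁆)
  have normal (i : Fin (r + 1)) : (c i).Normal := by
    cases i using Fin.cases with
    | zero => rw [h_zero]; infer_instance
    | succ i => exact (hc i).normal
  exact ⟨hG.solvableOfFiniteRank, ⁅H, H⁆, inferInstance, hN, inferInstance,
    virtuallyAbelian_quotient_commutator H, r, c, Fin.monotone_iff_le_succ.2 fun i => (hc i).le,
    h_zero, h_last ▸ Set.ext hT, fun i g t ht => (normal i).conj_mem t ht g,
    fun i => (hc i).commutator_mem, fun i => (hc i).exists_niceRep⟩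

end
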